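/- arXiv:2207.10976 — 2 statements merged into one kernel-verified Lean document; each statement's English description precedes it below -/
import Mathlib

section
/- Under the stated hypotheses on ψ, there exist t₀ > 0 and C > 1 such that for every t ∈ (0, t₀), the superlevel set {z ∈ D : G_D(z,z₀) ≥ −t} is contained in {z ∈ D : ψ(z) ≥ −Ct}. -/
open MeasureTheory Metric Complex Set Filter

noncomputable section

/-- `u` is harmonic on `s`: locally the real part of a holomorphic function. -/
def HarmonicOnD (u : ℂ → ℝ) (s : Set ℂ) : Prop :=
  ∀ z ∈ s, ∃ r > 0, Metric.ball z r ⊆ s ∧ ∃ f : ℂ → ℂ,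
    DifferentiableOn ℂ f (Metric.ball z r) ∧ ∀ w ∈ Metric.ball z r, u w = (f w).re

/-- Upper circle average of an `EReal`-valued function (via decreasing truncations). -/
noncomputable def circleAvgE (u : ℂ → EReal) (z : ℂ) (r : ℝ) : EReal :=
  ⨅ n : ℕ, ((((2 * Real.pi)⁻¹ *
      ∫ θ in (0:ℝ)..(2 * Real.pi),
        (max (u (circleMap z r θ)) ((-(n : ℝ) : ℝ) : EReal)).toReal) : ℝ) : EReal)

/-- `u` is subharmonic on the open set `s`. -/
def SubharmonicOnE (u : ℂ → EReal) (s : Set ℂ) : Prop :=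
  UpperSemicontinuousOn u s ∧ (∀ z ∈ s, u z ≠ ⊤) ∧ (∃ z ∈ s, u z ≠ ⊥) ∧
  ∀ z ∈ s, ∀ r : ℝ, 0 < r → Metric.closedBall z r ⊆ s → u z ≤ circleAvgE u z r

/-- The Lelong number `v(dd^c u, z₀)` of a subharmonic function. -/
noncomputable def lelongNumber (u : ℂ → EReal) (z₀ : ℂ) : ℝ :=
  sSup {a : ℝ | 0 ≤ a ∧ ∃ C : ℝ, ∃ r > 0, ∀ z : ℂ, z ≠ z₀ → dist z z₀ < r →
    u z ≤ ((a * Real.log (dist z z₀) + C : ℝ) : EReal)}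

/-- `G` is the (negative) Green function of `D` with pole at `z₀`. -/
structure IsGreenFunction (D : Set ℂ) (z₀ : ℂ) (G : ℂ → EReal) : Prop where
  neg : ∀ z ∈ D, G z < 0
  pole : G z₀ = ⊥
  logharm : ∃ h : ℂ → ℝ, HarmonicOnD h D ∧
    ∀ z ∈ D \ {z₀}, G z = ((Real.log (dist z z₀) + h z : ℝ) : EReal)
  bdry : ∀ w ∈ frontier D, Filter.Tendsto (fun z => (G z).toReal) (nhdsWithin w D) (nhds 0)

/-- `Γ` is an analytic Jordan curve. -/
def IsAnalyticJordanCurve (Γ : Set ℂ) : Prop :=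
  ∃ γ : ℝ → ℂ, AnalyticOnNhd ℝ γ Set.univ ∧ Function.Periodic γ (2 * Real.pi) ∧
    (∀ t, deriv γ t ≠ 0) ∧ Set.InjOn γ (Set.Ico 0 (2 * Real.pi)) ∧ Γ = Set.range γ

/-- `D` is a bounded planar regular region whose boundary consists of `n`
analytic Jordan curves. -/
def IsRegularRegion (n : ℕ) (D : Set ℂ) : Prop :=
  IsOpen D ∧ IsConnected D ∧ Bornology.IsBounded D ∧
  ∃ Γ : Fin n → Set ℂ, (∀ i, IsAnalyticJordanCurve (Γ i)) ∧
    (Pairwise fun i j => Disjoint (Γ i) (Γ j)) ∧ frontier D = ⋃ i, Γ i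

/-- `ν` is the outward unit normal vector field on `∂D`. -/
def IsOutwardUnitNormal (D : Set ℂ) (ν : ℂ → ℂ) : Prop :=
  ∀ z ∈ frontier D, ‖ν z‖ = 1 ∧
    (∀ᶠ t in nhdsWithin (0:ℝ) (Set.Ioi (0:ℝ)),
      z + t • ν z ∉ closure D ∧ z - t • ν z ∈ D) ∧
    (∀ γ : ℝ → ℂ, γ 0 = z → (∀ᶠ t in nhds (0:ℝ), γ t ∈ frontier D) →
      DifferentiableAt ℝ γ 0 → ((starRingEnd ℂ) (ν z) * deriv γ 0).re = 0)

/-- Arclength (1-dimensional Hausdorff) measure on the boundary of `D`. -/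
noncomputable def bdryArc (D : Set ℂ) : Measure ℂ :=
  (MeasureTheory.Measure.hausdorffMeasure 1).restrict (frontier D)

/-- The analytic Hardy class `H₂^(c)(D)`. -/
def HardyH2c (D : Set ℂ) (f : ℂ → ℂ) : Prop :=
  DifferentiableOn ℂ f D ∧ ∃ U : ℂ → ℝ, HarmonicOnD U D ∧ ∀ z ∈ D, ‖f z‖ ^ 2 ≤ U z

/-- Nontangential convergence of `f` to `L` at the boundary point `w`. -/
def NTTendsto (D : Set ℂ) (f : ℂ → ℂ) (w L : ℂ) : Prop :=
  ∀ α : ℝ, 1 < α →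
    Filter.Tendsto f
      (nhdsWithin w {z | z ∈ D ∧ dist z w ≤ α * Metric.infDist z (frontier D)}) (nhds L)

/-- `g` is the nontangential boundary value function of `f` (a.e. on `∂D`). -/
def IsNTBoundaryValue (D : Set ℂ) (f g : ℂ → ℂ) : Prop :=
  ∀ᵐ w ∂(bdryArc D), NTTendsto D f w (g w)

/-- `K` is the weighted Szegő kernel of `D` with boundary weight `lam`. -/
structure IsSzegoKernel (D : Set ℂ) (lam : ℂ → ℝ) (K : ℂ → ℂ → ℂ) : Prop where
  holo : ∀ w ∈ D, DifferentiableOn ℂ (fun z => K z w) D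
  cont : ∀ w ∈ D, ContinuousOn (fun z => K z w) (closure D)
  hardy : ∀ w ∈ D, HardyH2c D (fun z => K z w)
  hermitian : ∀ z ∈ D, ∀ w ∈ D, K z w = (starRingEnd ℂ) (K w z)
  sqfin : ∀ w ∈ D, (∫⁻ z, ENNReal.ofReal (‖K z w‖ ^ 2 * lam z) ∂(bdryArc D)) ≠ ⊤
  reproduce : ∀ f fb : ℂ → ℂ, HardyH2c D f → IsNTBoundaryValue D f fb → ∀ w ∈ D,
    f w = ((2 * Real.pi)⁻¹ : ℂ) * ∫ z, fb z * (starRingEnd ℂ) (K z w) * (lam z : ℂ) ∂(bdryArc D)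

/-- `B` is the weighted Bergman kernel of `D` with weight `ρ`. -/
structure IsBergmanKernel (D : Set ℂ) (ρ : ℂ → ℝ) (B : ℂ → ℂ → ℂ) : Prop where
  holo : ∀ w ∈ D, DifferentiableOn ℂ (fun z => B z w) D
  hermitian : ∀ z ∈ D, ∀ w ∈ D, B z w = (starRingEnd ℂ) (B w z)
  sqfin : ∀ w ∈ D, (∫⁻ z in D, ENNReal.ofReal (‖B z w‖ ^ 2 * ρ z)) ≠ ⊤
  reproduce : ∀ f : ℂ → ℂ, DifferentiableOn ℂ f D →
    IntegrableOn (fun z => ‖f z‖ ^ 2) D volume → ∀ w ∈ D,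
      f w = ∫ z in D, f z * (starRingEnd ℂ) (B z w) * (ρ z : ℂ)

/-- Extended-real logarithm (with `elog 0 = ⊥`). -/
noncomputable def elog (x : ℝ) : EReal := if x = 0 then ⊥ else ((Real.log x : ℝ) : EReal)

/-- `χ_{z₀}^m = χ_{-u}`: there is a holomorphic `F` on `D` with `log |F| = m·G + u`. -/
def charEqGreenPow (D : Set ℂ) (z₀ : ℂ) (G : ℂ → EReal) (u : ℂ → ℝ) (m : ℕ) : Prop :=
  ∃ F : ℂ → ℂ, DifferentiableOn ℂ F D ∧ ∀ z ∈ D \ {z₀},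
    F z ≠ 0 ∧ Real.log ‖F z‖ = m * (G z).toReal + u z

/-- `χ_{z₀} = χ_{-u}`. -/
def charEqGreen (D : Set ℂ) (z₀ : ℂ) (G : ℂ → EReal) (u : ℂ → ℝ) : Prop :=
  charEqGreenPow D z₀ G u 1

/-- The weight `ρ = e^{-φ} c(-2ψ)` (realized through `EReal.toReal`). -/
noncomputable def wgt2 (φ ψ : ℂ → EReal) (c : ℝ → ℝ) (z : ℂ) : ℝ :=
  Real.exp (-(φ z).toReal) * c ((-((2 : EReal) * ψ z)).toReal)

/-- The weight `e^{-φ} c(-ψ)` (realized through `EReal.toReal`). -/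
noncomputable def wgt1 (φ ψ : ℂ → EReal) (c : ℝ → ℝ) (z : ℂ) : ℝ :=
  Real.exp (-(φ z).toReal) * c ((-(ψ z)).toReal)

/-- Admissible gain function `c` on `[0,∞)`. -/
structure AdmissibleC (c : ℝ → ℝ) : Prop where
  meas : Measurable c
  pos : ∀ t : ℝ, 0 ≤ t → 0 < c t
  mono : ∀ s t : ℝ, 0 ≤ s → s ≤ t → c t * Real.exp (-t) ≤ c s * Real.exp (-s)
  limz : Filter.Tendsto c (nhdsWithin 0 (Set.Ioi 0)) (nhds 1)
  czero : c 0 = 1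
  fin : (∫⁻ t in Set.Ioi (0:ℝ), ENNReal.ofReal (c t * Real.exp (-t))) ≠ ⊤

/-- Admissible gain function `c` on `(0,∞)` (no normalization at `0`). -/
structure AdmissibleC' (c : ℝ → ℝ) : Prop where
  meas : Measurable c
  pos : ∀ t : ℝ, 0 < t → 0 < c t
  mono : ∀ s t : ℝ, 0 < s → s ≤ t → c t * Real.exp (-t) ≤ c s * Real.exp (-s)
  fin : (∫⁻ t in Set.Ioi (0:ℝ), ENNReal.ofReal (c t * Real.exp (-t))) ≠ ⊤

/-- `Z` is a discrete subset of `D`. -/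
def DiscreteIn (Z D : Set ℂ) : Prop :=
  Z ⊆ D ∧ ∀ z ∈ D, ∃ r > 0, Metric.ball z r ∩ Z ⊆ {z}

/-- `w` has a positive lower bound on every compact subset of `D ∖ Z`. -/
def PosLowerBoundOnCompacts (D Z : Set ℂ) (w : ℂ → ℝ) : Prop :=
  ∀ Kc : Set ℂ, Kc ⊆ D \ Z → IsCompact Kc → ∃ m : ℝ, 0 < m ∧ ∀ z ∈ Kc, m ≤ w z

/-- `∫₀^∞ c(t) e^{-t} dt`. -/
noncomputable def cInt (c : ℝ → ℝ) : ℝ := ∫ t in Set.Ioi (0:ℝ), c t * Real.exp (-t)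

/-- `h(t) = ∫_t^∞ c(s) e^{-s} ds`. -/
noncomputable def hFun (c : ℝ → ℝ) (t : ℝ) : ℝ := ∫ s in Set.Ioi t, c s * Real.exp (-s)

end

/-! Both functions are comparable with the distance `δ` to the boundary. A compact `C²` boundary
admits tangent interior balls of a uniform radius `r`; in such a ball, centred at depth at least
`r`, Harnack's inequality bounds `-G` below by a multiple of its value at the centre times `δ / r`,
so `G ≤ -κ δ` on `D`. On the other side `ψ` is Lipschitz near the boundary and vanishes on it, so
`ψ ≥ -L δ` there. Hence `G ≥ -t` forces `δ ≤ t / κ` and `ψ ≥ -(L / κ) t`.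
-/

open InnerProductSpace
open scoped Topology

lemma exists_eventually_nhdsSet_of_monotone {X ι : Type*} [TopologicalSpace X] [Preorder ι]
    [IsDirectedOrder ι] [Nonempty ι] {K : Set X} (hK : IsCompact K) {P : ι → X → Prop}
    (hmono : ∀ x, Monotone (P · x)) (hloc : ∀ x ∈ K, ∃ c, ∀ᶠ y in 𝓝 x, P c y) :
    ∃ c, ∀ᶠ y in 𝓝ˢ K, P c y := by
  have hprod : {p : ι × X | P p.1 p.2} ∈ atTop ×ˢ 𝓝ˢ K := by
    refine hK.mem_prod_nhdsSet_of_forall fun x hx ↦ ?_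
    obtain ⟨c, hc⟩ := hloc x hx
    filter_upwards [(eventually_ge_atTop c).prod_mk hc] with p hp using hmono _ hp.1 hp.2
  exact (Eventually.curry hprod).exists

lemma map_nhds_eq_nhdsWithin_range_of_periodic {X : Type*} [TopologicalSpace X] [T2Space X]
    {γ : ℝ → X} {T : ℝ} (hT : 0 < T) (hγ : Continuous γ) (hper : Function.Periodic γ T)
    (hinj : InjOn γ (Ico 0 T)) (s : ℝ) : map γ (𝓝 s) = 𝓝[range γ] (γ s) := by
  have : Fact (0 < T) := ⟨hT⟩
  let g : AddCircle T → X := hper.lift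
  have hg : Continuous g := hγ.quotient_lift _
  have hginj : Function.Injective g := by
    intro x y hxy
    obtain ⟨a, ha, rfl⟩ := AddCircle.eq_coe_Ico x
    obtain ⟨b, hb, rfl⟩ := AddCircle.eq_coe_Ico y
    rw [hinj ha hb hxy]
  have hrange : range g = range γ := by
    rw [← QuotientAddGroup.mk_surjective.range_comp g]
    rfl
  have hemb := (hg.isClosedEmbedding hginj).isEmbedding.map_nhds_eq (s : AddCircle T)
  rwa [QuotientAddGroup.nhds_eq, map_map, hrange] at hemb

section RegularCurve

variable {E : Type*} [NormedAddCommGroup E] [NormedSpace ℝ E] {γ : ℝ → E} {s : ℝ}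

lemma sub_sub_smul_deriv_isBigO_sq (hγ : ContDiffAt ℝ 2 γ s) :
    (fun p : ℝ × ℝ ↦ γ p.1 - γ p.2 - (p.1 - p.2) • deriv γ p.2) =O[𝓝 (s, s)]
      fun p ↦ (p.1 - p.2) ^ 2 := by
  have hderiv : ContDiffAt ℝ 1 (deriv γ) s := by
    simpa only [fderiv_apply_one_eq_deriv] using
      (hγ.fderiv_right (m := 1) (by norm_num)).clm_apply (contDiffAt_const (c := (1 : ℝ)))
  obtain ⟨M, V, hV, hlip⟩ := hderiv.exists_lipschitzOnWith
  have hdiff : ∀ᶠ t in 𝓝 s, DifferentiableAt ℝ γ t :=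
    (hγ.eventually (by simp)).mono fun t ht ↦ ht.differentiableAt (by simp)
  obtain ⟨ε, hε, hball⟩ := Metric.mem_nhds_iff.1 (hdiff.and hV)
  refine .of_bound M ?_
  filter_upwards [prod_mem_nhds (ball_mem_nhds s hε) (ball_mem_nhds s hε)] with p ⟨ht, hu⟩
  have hsub : uIcc p.2 p.1 ⊆ ball s ε := by
    rw [← segment_eq_uIcc]
    exact (convex_ball s ε).segment_subset hu ht
  have hmvt := (convex_uIcc p.2 p.1).norm_image_sub_le_of_norm_hasDerivWithin_le
    (f := fun x ↦ γ x - x • deriv γ p.2) (f' := fun x ↦ deriv γ x - deriv γ p.2)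
    (C := M * ‖p.1 - p.2‖) (fun x hx ↦ ?_) (fun x hx ↦ ?_) left_mem_uIcc right_mem_uIcc
  · rw [norm_pow, pow_two, ← mul_assoc]
    convert hmvt using 2
    module
  · simpa [Pi.sub_def] using ((hball (hsub hx)).1.hasDerivAt.sub
      ((hasDerivAt_id x).smul_const (deriv γ p.2))).hasDerivWithinAt
  · calc ‖deriv γ x - deriv γ p.2‖ ≤ M * ‖x - p.2‖ := by
          simpa only [dist_eq_norm] using hlip.dist_le_mul x (hball (hsub hx)).2 p.2 (hball hu).2
      _ ≤ M * ‖p.1 - p.2‖ :=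
          mul_le_mul_of_nonneg_left (abs_sub_left_of_mem_uIcc hx) M.coe_nonneg

lemma sub_sub_smul_deriv_isBigO_norm_sub_sq (hγ : ContDiffAt ℝ 2 γ s) (hs : deriv γ s ≠ 0) :
    (fun p : ℝ × ℝ ↦ γ p.1 - γ p.2 - (p.1 - p.2) • deriv γ p.2) =O[𝓝 (s, s)]
      fun p ↦ ‖γ p.1 - γ p.2‖ ^ 2 := by
  have hstrict : HasStrictDerivAt γ (deriv γ s) s := hγ.hasStrictDerivAt (by simp)
  have hchord : (fun p : ℝ × ℝ ↦ p.1 - p.2) =O[𝓝 (s, s)] fun p ↦ γ p.1 - γ p.2 :=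
    (HasDerivAtFilter.isTheta_sub hstrict hs).isBigO_symm
  exact (sub_sub_smul_deriv_isBigO_sq hγ).trans (hchord.norm_right.pow 2)

/-- Near `x`, the set `S` is the trace of a single `C²` arc through `x` with nonzero velocity.
The filter equality says both that the arc stays in `S` and that it exhausts `S` near `x`. -/
def IsRegularCurveAt (S : Set E) (x : E) : Prop :=
  ∃ (γ : ℝ → E) (s : ℝ), ContDiffAt ℝ 2 γ s ∧ deriv γ s ≠ 0 ∧ γ s = x ∧ map γ (𝓝 s) = 𝓝[S] x

end RegularCurve

section ProxRegular

variable {E : Type*} [NormedAddCommGroup E] [InnerProductSpace ℝ E] {S : Set E}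

/-- Uniform prox-regularity (Federer's positive reach) of `S`, with constant `K`: every vector
`z - q` from a nearest point `q ∈ S` of `z` makes an obtuse angle with all of `S`, up to a
quadratic error. The equation `infDist z S = dist z q` encodes that `q` is a nearest point. -/
def IsProxRegularWith (K : ℝ) (S : Set E) : Prop :=
  ∀ z, ∀ q ∈ S, infDist z S = dist z q → ∀ p ∈ S, ⟪z - q, p - q⟫_ℝ ≤ K * ‖z - q‖ * ‖p - q‖ ^ 2

lemma inner_sub_deriv_eq_zero_of_infDist_eq {γ : ℝ → E} {u : ℝ} {z : E}
    (hγ : DifferentiableAt ℝ γ u) (hS : ∀ᶠ t in 𝓝 u, γ t ∈ S) (hz : infDist z S = dist z (γ u)) :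
    ⟪z - γ u, deriv γ u⟫_ℝ = 0 := by
  have hmin : IsLocalMin (fun t ↦ ‖z - γ t‖ ^ 2) u := by
    filter_upwards [hS] with t ht
    gcongr
    simpa only [← dist_eq_norm, ← hz] using infDist_le_dist_of_mem ht
  have hderiv := (hγ.hasDerivAt.const_sub z).norm_sq
  simpa using hmin.hasDerivAt_eq_zero hderiv

lemma IsRegularCurveAt.eventually_inner_le {x : E} (hx : IsRegularCurveAt S x) :
    ∃ K : ℝ, ∀ᶠ p : E × E in 𝓝[S ×ˢ S] (x, x), ∀ z, infDist z S = dist z p.2 →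
      ⟪z - p.2, p.1 - p.2⟫_ℝ ≤ K * ‖z - p.2‖ * ‖p.1 - p.2‖ ^ 2 := by
  obtain ⟨γ, s, hγ, hs, rfl, hmap⟩ := hx
  obtain ⟨K, hK⟩ := (sub_sub_smul_deriv_isBigO_norm_sub_sq hγ hs).bound
  have hmem : ∀ᶠ u in 𝓝 s, ∀ᶠ t in 𝓝 u, γ t ∈ S :=
    eventually_eventually_nhds.2 (hmap.le self_mem_nhdsWithin)
  have hdiff : ∀ᶠ u in 𝓝 s, DifferentiableAt ℝ γ u :=
    (hγ.eventually (by simp)).mono fun t ht ↦ ht.differentiableAt (by simp)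
  refine ⟨K, ?_⟩
  rw [nhdsWithin_prod_eq, ← hmap, prod_map_map_eq, ← nhds_prod_eq, eventually_map]
  filter_upwards [hK, continuousAt_snd.eventually (hmem.and hdiff)] with ⟨t, u⟩ hrem ⟨hu, hdu⟩ z hz
  have horth : ⟪z - γ u, deriv γ u⟫_ℝ = 0 := inner_sub_deriv_eq_zero_of_infDist_eq hdu hu hz
  calc ⟪z - γ u, γ t - γ u⟫_ℝ = ⟪z - γ u, γ t - γ u - (t - u) • deriv γ u⟫_ℝ := by
        rw [inner_sub_right _ (γ t - γ u), real_inner_smul_right, horth, mul_zero, sub_zero]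
    _ ≤ ‖z - γ u‖ * ‖γ t - γ u - (t - u) • deriv γ u‖ := real_inner_le_norm _ _
    _ ≤ ‖z - γ u‖ * (K * ‖γ t - γ u‖ ^ 2) := by gcongr; simpa using hrem
    _ = K * ‖z - γ u‖ * ‖γ t - γ u‖ ^ 2 := by ring

lemma eventually_inner_le_of_ne {p q : E} (h : p ≠ q) :
    ∀ᶠ x : E × E in 𝓝 (p, q), ∀ z,
      ⟪z - x.2, x.1 - x.2⟫_ℝ ≤ 2 / ‖p - q‖ * ‖z - x.2‖ * ‖x.1 - x.2‖ ^ 2 := by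
  have hpq : 0 < ‖p - q‖ := norm_pos_iff.2 (sub_ne_zero.2 h)
  have hfar : ∀ᶠ x : E × E in 𝓝 (p, q), ‖p - q‖ / 2 < ‖x.1 - x.2‖ :=
    (by fun_prop : Continuous fun x : E × E ↦ ‖x.1 - x.2‖).continuousAt.eventually_const_lt
      (half_lt_self hpq)
  filter_upwards [hfar] with x hx z
  calc ⟪z - x.2, x.1 - x.2⟫_ℝ ≤ ‖z - x.2‖ * ‖x.1 - x.2‖ * 1 := by
        simpa using real_inner_le_norm _ _
    _ ≤ ‖z - x.2‖ * ‖x.1 - x.2‖ * (‖x.1 - x.2‖ / (‖p - q‖ / 2)) := by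
        gcongr
        exact (one_le_div (by positivity)).2 hx.le
    _ = 2 / ‖p - q‖ * ‖z - x.2‖ * ‖x.1 - x.2‖ ^ 2 := by ring

lemma exists_isProxRegularWith (hS : IsCompact S) (hreg : ∀ x ∈ S, IsRegularCurveAt S x) :
    ∃ K, IsProxRegularWith K S := by
  let P (K : ℝ) (x : E × E) : Prop := x ∈ S ×ˢ S → ∀ z, infDist z S = dist z x.2 →
    ⟪z - x.2, x.1 - x.2⟫_ℝ ≤ K * ‖z - x.2‖ * ‖x.1 - x.2‖ ^ 2
  have hmono : ∀ x, Monotone (P · x) := fun x K L hKL hK hx z hz ↦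
    (hK hx z hz).trans (by gcongr)
  obtain ⟨K, hK⟩ := exists_eventually_nhdsSet_of_monotone (hS.prod hS) hmono fun ⟨p, q⟩ hpq ↦ by
    obtain rfl | hne := eq_or_ne p q
    · obtain ⟨K, hK⟩ := (hreg p hpq.1).eventually_inner_le
      exact ⟨K, eventually_nhdsWithin_iff.1 hK⟩
    · exact ⟨_, (eventually_inner_le_of_ne hne).mono fun x hx _ z _ ↦ hx z⟩
  exact ⟨K, fun z q hq hz p hp ↦ hK.self_of_nhdsSet (p, q) ⟨hp, hq⟩ ⟨hp, hq⟩ z hz⟩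

end ProxRegular

section InteriorBall

lemma subset_of_isPreconnected_of_disjoint_frontier {X : Type*} [TopologicalSpace X] {s D : Set X}
    (hs : IsPreconnected s) (hne : (s ∩ D).Nonempty) (hdisj : Disjoint s (frontier D)) :
    s ⊆ D := by
  have hcover : s ⊆ interior D ∪ interior Dᶜ :=
    compl_frontier_eq_union_interior (s := D) ▸ hdisj.subset_compl_right
  have hsep : Disjoint (interior D) (interior Dᶜ) :=
    disjoint_compl_right.mono interior_subset interior_subset
  obtain ⟨x, hxs, hxD⟩ := hne
  have hx : x ∈ interior D := (hcover hxs).resolve_right fun h ↦ interior_subset h hxD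
  exact (hs.subset_left_of_subset_union isOpen_interior isOpen_interior hsep hcover
    ⟨x, hxs, hx⟩).trans interior_subset

variable {E : Type*} [NormedAddCommGroup E] [InnerProductSpace ℝ E]

lemma IsProxRegularWith.ball_disjoint {S : Set E} {K r : ℝ} {z q : E}
    (hS : IsProxRegularWith K S) (hr : 0 < r) (hrK : 2 * r * K ≤ 1) (hq : q ∈ S) (hzq : z ≠ q)
    (hz : infDist z S = dist z q) : Disjoint (ball (q + (r / dist z q) • (z - q)) r) S := by
  rw [Set.disjoint_right]
  intro p hp
  have hδ : 0 < ‖z - q‖ := norm_pos_iff.2 (sub_ne_zero.2 hzq)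
  rw [mem_ball, not_lt, dist_eq_norm, dist_eq_norm]
  refine le_of_sq_le_sq ?_ (norm_nonneg _)
  have hinner : 2 * (r / ‖z - q‖) * ⟪z - q, p - q⟫_ℝ ≤ ‖p - q‖ ^ 2 :=
    calc 2 * (r / ‖z - q‖) * ⟪z - q, p - q⟫_ℝ
        ≤ 2 * (r / ‖z - q‖) * (K * ‖z - q‖ * ‖p - q‖ ^ 2) := by gcongr; exact hS z q hq hz p hp
      _ = 2 * r * K * ‖p - q‖ ^ 2 := by field_simp
      _ ≤ ‖p - q‖ ^ 2 := mul_le_of_le_one_left (by positivity) hrK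
  calc r ^ 2 = ‖(r / ‖z - q‖) • (z - q)‖ ^ 2 := by
        rw [norm_smul, Real.norm_of_nonneg (by positivity), div_mul_cancel₀ _ hδ.ne']
    _ ≤ ‖p - q‖ ^ 2 - 2 * ((r / ‖z - q‖) * ⟪z - q, p - q⟫_ℝ) + ‖(r / ‖z - q‖) • (z - q)‖ ^ 2 := by
        linarith
    _ = ‖p - (q + (r / ‖z - q‖) • (z - q))‖ ^ 2 := by
        rw [← sub_sub, norm_sub_sq_real (p - q), real_inner_smul_right, real_inner_comm]

lemma exists_interior_ball {D : Set E} {K r : ℝ} {z : E} (hS : IsProxRegularWith K (frontier D))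
    (hcomp : IsCompact (frontier D)) (hne : (frontier D).Nonempty) (hr : 0 < r)
    (hrK : 2 * r * K ≤ 1) (hzD : z ∈ interior D) (hz : infDist z (frontier D) ≤ r) :
    ∃ a, ball a r ⊆ D ∧ dist z a + infDist z (frontier D) = r := by
  obtain ⟨q, hq, hzq⟩ := hcomp.exists_infDist_eq_dist hne z
  have hzq_ne : z ≠ q := fun h ↦ disjoint_interior_frontier.notMem_of_mem_left hzD (h ▸ hq)
  have hpos : 0 < ‖z - q‖ := norm_pos_iff.2 (sub_ne_zero.2 hzq_ne)
  set a : E := q + (r / dist z q) • (z - q)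
  have hdist : dist z a + infDist z (frontier D) = r := by
    have hza : z - a = (1 - r / ‖z - q‖) • (z - q) := by
      simp only [a, dist_eq_norm]
      module
    rw [hzq, dist_eq_norm z q] at hz
    rw [hzq, dist_eq_norm z a, dist_eq_norm z q, hza, norm_smul, Real.norm_of_nonpos
      (sub_nonpos.2 ((one_le_div hpos).2 hz))]
    field_simp
    ring
  refine ⟨a, subset_of_isPreconnected_of_disjoint_frontier (convex_ball a r).isPreconnected
    ⟨z, ?_, interior_subset hzD⟩ (hS.ball_disjoint hr hrK hq hzq_ne hzq), hdist⟩
  rw [mem_ball, ← hdist, hzq, lt_add_iff_pos_right, dist_pos]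
  exact hzq_ne

end InteriorBall

section Harnack

lemma harnack_lower_bound_of_harmonicContOnCl {u : ℂ → ℝ} {a w : ℂ} {R : ℝ}
    (hu : HarmonicContOnCl u (ball a R)) (hpos : ∀ z ∈ sphere a R, 0 ≤ u z) (hw : w ∈ ball a R) :
    (R - ‖w - a‖) / (R + ‖w - a‖) * u a ≤ u w := by
  have hR : 0 < R := pos_of_mem_ball hw
  have hcont : ContinuousOn u (sphere a R) :=
    hu.2.mono (closure_ball a hR.ne' ▸ sphere_subset_closedBall)
  have hker : ContinuousOn (re ∘ herglotzRieszKernel a w) (sphere a R) :=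
    continuous_re.comp_continuousOn (abs_of_pos hR ▸ continuousOn_herglotzRieszKernel_sphere hw)
  calc (R - ‖w - a‖) / (R + ‖w - a‖) * u a
      = Real.circleAverage (((R - ‖w - a‖) / (R + ‖w - a‖)) • u) a R := by
        rw [Real.circleAverage_smul, smul_eq_mul,
          InnerProductSpace.HarmonicContOnCl.circleAverage_eq (by rwa [abs_of_pos hR])]
    _ ≤ Real.circleAverage ((re ∘ herglotzRieszKernel a w) • u) a R := by
        refine Real.circleAverage_mono ((hcont.const_smul _).circleIntegrable hR.le)
          ((hker.smul hcont).circleIntegrable hR.le) fun z hz ↦ ?_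
        rw [abs_of_pos hR] at hz
        exact mul_le_mul_of_nonneg_right (le_re_herglotzRieszKernel hz hw) (hpos z hz)
    _ = u w := hu.circleAverage_re_herglotzRieszKernel_smul hw

lemma harnack_lower_bound {u : ℂ → ℝ} {a w : ℂ} {r : ℝ} (hu : HarmonicOnNhd u (ball a r))
    (hpos : ∀ z ∈ ball a r, 0 ≤ u z) (hw : w ∈ ball a r) :
    (r - ‖w - a‖) / (r + ‖w - a‖) * u a ≤ u w := by
  have hr : 0 < r := pos_of_mem_ball hw
  have hlim : Tendsto (fun R ↦ (R - ‖w - a‖) / (R + ‖w - a‖) * u a) (𝓝[<] r)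
      (𝓝 ((r - ‖w - a‖) / (r + ‖w - a‖) * u a)) := by
    have hne : r + ‖w - a‖ ≠ 0 := by positivity
    exact ContinuousAt.continuousWithinAt (by fun_prop (disch := exact hne))
  refine le_of_tendsto hlim ?_
  filter_upwards [Ioo_mem_nhdsLT (mem_ball.1 hw)] with R ⟨hwR, hRr⟩
  refine harnack_lower_bound_of_harmonicContOnCl (HarmonicOnNhd.harmonicContOnCl
    (hu.mono ?_)) (fun z hz ↦ hpos z (mem_ball.2 (hz.trans_lt hRr))) hwR
  exact closure_ball_subset_closedBall.trans (closedBall_subset_ball hRr)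

end Harnack

section Frontier

lemma isCompact_frontier_of_isBounded {X : Type*} [PseudoMetricSpace X] [ProperSpace X] {s : Set X}
    (hs : Bornology.IsBounded s) : IsCompact (frontier s) :=
  hs.isCompact_closure.of_isClosed_subset isClosed_frontier frontier_subset_closure

lemma nonempty_frontier_of_isBounded {E : Type*} [NormedAddCommGroup E] [NormedSpace ℝ E]
    [Nontrivial E] {s : Set E} (hs : Bornology.IsBounded s) (hne : s.Nonempty) :
    (frontier s).Nonempty :=
  nonempty_frontier_iff.2 ⟨hne, fun h ↦ NormedSpace.unbounded_univ ℝ E (h ▸ hs)⟩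

lemma infDist_frontier_pos {X : Type*} [PseudoMetricSpace X] {s : Set X} {x : X}
    (hs : IsOpen s) (hne : (frontier s).Nonempty) (hx : x ∈ s) : 0 < infDist x (frontier s) :=
  (isClosed_frontier.notMem_iff_infDist_pos hne).1 fun h ↦ (hs.frontier_eq ▸ h).2 hx

lemma infDist_frontier_le_diam {X : Type*} [PseudoMetricSpace X] {s : Set X} {x : X}
    (hs : Bornology.IsBounded s) (hx : x ∈ s) : infDist x (frontier s) ≤ diam s := by
  obtain h | ⟨q, hq⟩ := (frontier s).eq_empty_or_nonempty
  · rw [h, infDist_empty]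
    exact diam_nonneg
  · calc infDist x (frontier s) ≤ dist x q := infDist_le_dist_of_mem hq
      _ ≤ diam (closure s) :=
        dist_le_diam_of_mem hs.closure (subset_closure hx) (frontier_subset_closure hq)
      _ = diam s := diam_closure s

end Frontier

section LipschitzBound

lemma exists_eventually_norm_le_mul_infDist {X F : Type*} [PseudoMetricSpace X]
    [NormedAddCommGroup F] {f : X → F} {K : Set X} (hK : IsCompact K)
    (hlip : ∀ x ∈ K, ∃ C, ∃ t ∈ 𝓝 x, LipschitzOnWith C f t) (hzero : ∀ x ∈ K, f x = 0) :
    ∃ L : NNReal, ∀ᶠ z in 𝓝ˢ K, ‖f z‖ ≤ L * infDist z K := by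
  refine exists_eventually_nhdsSet_of_monotone hK
    (fun z C L hCL h ↦ h.trans (mul_le_mul_of_nonneg_right hCL infDist_nonneg)) fun x hx ↦ ?_
  obtain ⟨C, t, ht, hC⟩ := hlip x hx
  obtain ⟨ε, hε, hball⟩ := Metric.mem_nhds_iff.1 ht
  refine ⟨C, ?_⟩
  filter_upwards [ball_mem_nhds x (half_pos hε)] with z hz
  obtain ⟨q, hq, hzq⟩ := hK.exists_infDist_eq_dist ⟨x, hx⟩ z
  have hzx : dist z x < ε / 2 := hz
  have hqx : dist q x < ε :=
    calc dist q x ≤ dist z q + dist z x := dist_triangle_left _ _ _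
      _ ≤ dist z x + dist z x := by gcongr; exact hzq ▸ infDist_le_dist_of_mem hx
      _ < ε := by linarith
  calc ‖f z‖ = dist (f z) (f q) := by rw [hzero q hq, dist_zero_right]
    _ ≤ C * dist z q := hC.dist_le_mul z (hball (ball_subset_ball (half_le_self hε.le) hz)) q
        (hball hqx)
    _ = C * infDist z K := by rw [hzq]

lemma exists_neg_mul_infDist_frontier_le {D U : Set ℂ} {ψ : ℂ → EReal} {f : ℂ → ℝ}
    (hD : Bornology.IsBounded D) (hψ0 : ∀ z ∈ frontier D, ψ z = 0) (hU : IsOpen U)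
    (hUD : frontier D ⊆ U) (hf : ContDiffOn ℝ 1 f U)
    (hψf : ∀ z ∈ U ∩ closure D, ψ z = ((f z : ℝ) : EReal)) :
    ∃ L : ℝ, ∃ d > 0, ∀ z ∈ D, infDist z (frontier D) < d →
      ((-(L * infDist z (frontier D)) : ℝ) : EReal) ≤ ψ z := by
  have hK : IsCompact (frontier D) := isCompact_frontier_of_isBounded hD
  have hf0 : ∀ z ∈ frontier D, f z = 0 := fun z hz ↦
    EReal.coe_eq_zero.1 ((hψf z ⟨hUD hz, frontier_subset_closure hz⟩).symm.trans (hψ0 z hz))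
  obtain ⟨L, hL⟩ := exists_eventually_norm_le_mul_infDist hK
    (fun x hx ↦ (hf.contDiffAt (hU.mem_nhds (hUD hx))).exists_lipschitzOnWith) hf0
  obtain ⟨d, hd, hthick⟩ := (hasBasis_nhdsSet_thickening hK).eventually_iff.1
    (hL.and (hU.mem_nhdsSet.2 hUD))
  refine ⟨L, d, hd, fun z hzD hzd ↦ ?_⟩
  have hne : (frontier D).Nonempty := nonempty_frontier_of_isBounded hD ⟨z, hzD⟩
  obtain ⟨hfz, hzU⟩ := hthick ((mem_thickening_iff_infDist_lt hne).2 hzd)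
  rw [hψf z ⟨hzU, subset_closure hzD⟩, EReal.coe_le_coe_iff]
  exact neg_le_of_abs_le hfz

end LipschitzBound

section Green

lemma HarmonicOnD.harmonicOnNhd {u : ℂ → ℝ} {s : Set ℂ} (hu : HarmonicOnD u s) :
    HarmonicOnNhd u s := by
  intro z hz
  obtain ⟨r, hr, -, f, hf, huf⟩ := hu z hz
  refine (harmonicAt_congr_nhds ?_).2 (hf.analyticAt (ball_mem_nhds z hr)).harmonicAt_re
  filter_upwards [ball_mem_nhds z hr] with w hw using huf w hw

variable {D : Set ℂ} {z₀ : ℂ} {G : ℂ → EReal}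

lemma IsGreenFunction.coe_toReal (hG : IsGreenFunction D z₀ G) {z : ℂ} (hz : z ∈ D \ {z₀}) :
    ((G z).toReal : EReal) = G z := by
  obtain ⟨h, -, hGh⟩ := hG.logharm
  rw [hGh z hz, EReal.toReal_coe]

lemma IsGreenFunction.harmonicOnNhd_toReal (hG : IsGreenFunction D z₀ G) (hD : IsOpen D) :
    HarmonicOnNhd (fun z ↦ (G z).toReal) (D \ {z₀}) := by
  obtain ⟨h, hh, hGh⟩ := hG.logharm
  intro z hz
  have hlog : HarmonicAt (fun w ↦ Real.log ‖w - z₀‖) z :=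
    AnalyticAt.harmonicAt_log_norm (by fun_prop) (sub_ne_zero.2 hz.2)
  refine (harmonicAt_congr_nhds ?_).2 (hlog.add (hh.harmonicOnNhd z hz.1))
  filter_upwards [(hD.sdiff isClosed_singleton).mem_nhds hz] with w hw
  rw [hGh w hw, EReal.toReal_coe, Pi.add_apply, dist_eq_norm]

lemma IsGreenFunction.exists_le_neg_of_isCompact (hG : IsGreenFunction D z₀ G) {S : Set ℂ}
    (hS : IsCompact S) (hSD : S ⊆ D) : ∃ m > (0 : ℝ), ∀ z ∈ S, G z ≤ ((-m : ℝ) : EReal) := by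
  obtain ⟨h, hh, hGh⟩ := hG.logharm
  let E (z : ℂ) : ℝ := dist z z₀ * Real.exp (h z)
  have hlog : ∀ z ∈ D \ {z₀}, 0 < E z ∧ G z = ((Real.log (E z) : ℝ) : EReal) := fun z hz ↦ by
    have hdist : 0 < dist z z₀ := dist_pos.2 hz.2
    refine ⟨by positivity, ?_⟩
    rw [hGh z hz, Real.log_mul hdist.ne' (Real.exp_ne_zero _), Real.log_exp]
  have hE : ∀ z ∈ S, 0 < 1 - E z := fun z hz ↦ by
    rw [sub_pos]
    obtain rfl | hne := eq_or_ne z z₀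
    · simp [E]
    · obtain ⟨hpos, hGz⟩ := hlog z ⟨hSD hz, hne⟩
      exact (Real.log_neg_iff hpos).1 (EReal.coe_neg'.1 (hGz ▸ hG.neg z (hSD hz)))
  have hcont : ContinuousOn E S := by
    have hh' : ContinuousOn h S := hh.harmonicOnNhd.continuousOn.mono hSD
    fun_prop
  obtain ⟨m, hm, hEm⟩ := hS.exists_forall_le' (continuousOn_const.sub hcont) hE
  refine ⟨m, hm, fun z hz ↦ ?_⟩
  obtain rfl | hne := eq_or_ne z z₀
  · simp [hG.pole]
  · obtain ⟨hpos, hGz⟩ := hlog z ⟨hSD hz, hne⟩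
    have hmE : m ≤ 1 - E z := hEm z hz
    rw [hGz, EReal.coe_le_coe_iff]
    linarith [Real.log_le_sub_one_of_pos hpos]

lemma IsGreenFunction.exists_le_neg_of_le_infDist_frontier (hG : IsGreenFunction D z₀ G)
    (hbdd : Bornology.IsBounded D) {r : ℝ} (hr : 0 < r) :
    ∃ m > (0 : ℝ), ∀ z ∈ D, r ≤ infDist z (frontier D) → G z ≤ ((-m : ℝ) : EReal) := by
  have hcore : IsCompact (closure D ∩ {z | r ≤ infDist z (frontier D)}) :=
    hbdd.isCompact_closure.inter_right (isClosed_le continuous_const (continuous_infDist_pt _))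
  have hcoreD : closure D ∩ {z | r ≤ infDist z (frontier D)} ⊆ D := fun z ⟨hz, hrz⟩ ↦ by
    have hzf : z ∉ frontier D := fun h ↦ hr.not_ge (infDist_zero_of_mem h ▸ hrz)
    exact interior_subset (closure_sdiff_frontier D ▸ ⟨hz, hzf⟩)
  obtain ⟨m, hm, hGm⟩ := hG.exists_le_neg_of_isCompact hcore hcoreD
  exact ⟨m, hm, fun z hz hrz ↦ hGm z ⟨subset_closure hz, hrz⟩⟩

lemma IsGreenFunction.le_neg_mul_of_mem_ball (hG : IsGreenFunction D z₀ G) (hD : IsOpen D)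
    {a z : ℂ} {r m : ℝ} (hball : ball a r ⊆ D \ {z₀}) (hm : 0 ≤ m) (ha : G a ≤ ((-m : ℝ) : EReal))
    (hz : z ∈ ball a r) : G z ≤ ((-(m / (2 * r) * (r - dist z a)) : ℝ) : EReal) := by
  have hr : 0 < r := pos_of_mem_ball hz
  have hneg : ∀ w ∈ ball a r, 0 ≤ -(G w).toReal := fun w hw ↦ by
    rw [neg_nonneg, ← EReal.coe_nonpos, hG.coe_toReal (hball hw)]
    exact (hG.neg w (hball hw).1).le
  have hharnack := harnack_lower_bound ((hG.harmonicOnNhd_toReal hD).mono hball).neg hneg hz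
  rw [← hG.coe_toReal (hball (mem_ball_self hr)), EReal.coe_le_coe_iff] at ha
  rw [← hG.coe_toReal (hball hz), EReal.coe_le_coe_iff, le_neg]
  have hza : dist z a < r := hz
  rw [← dist_eq_norm] at hharnack
  calc m / (2 * r) * (r - dist z a) = (r - dist z a) / (r + r) * m := by ring
    _ ≤ (r - dist z a) / (r + dist z a) * -(G a).toReal := by (gcongr; linarith)
    _ ≤ -(G z).toReal := hharnack

lemma IsGreenFunction.le_neg_mul_infDist_of_infDist_le (hG : IsGreenFunction D z₀ G)
    (hD : IsOpen D) (hbdd : Bornology.IsBounded D) {K r m : ℝ}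
    (hreg : IsProxRegularWith K (frontier D)) (hr : 0 < r) (hrK : 2 * r * K ≤ 1)
    (hrz₀ : 2 * r ≤ infDist z₀ (frontier D)) (hm : 0 ≤ m)
    (hGm : ∀ w ∈ D, r ≤ infDist w (frontier D) → G w ≤ ((-m : ℝ) : EReal))
    {z : ℂ} (hzD : z ∈ D) (hz : infDist z (frontier D) ≤ r) :
    G z ≤ ((-(m / (2 * r) * infDist z (frontier D)) : ℝ) : EReal) := by
  have hne : (frontier D).Nonempty := nonempty_frontier_of_isBounded hbdd ⟨z, hzD⟩
  obtain ⟨a, hball, hza⟩ := exists_interior_ball hreg (isCompact_frontier_of_isBounded hbdd) hne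
    hr hrK (hD.interior_eq.symm ▸ hzD) hz
  have haD : r ≤ infDist a (frontier D) := (le_infDist hne).2 fun p hp ↦ by
    by_contra! hpa
    exact (hD.frontier_eq ▸ hp).2 (hball (mem_ball'.2 hpa))
  have ha_le : infDist a (frontier D) ≤ r :=
    calc infDist a (frontier D) ≤ infDist z (frontier D) + dist a z :=
          infDist_le_infDist_add_dist
      _ = r := by rw [← hza, add_comm, dist_comm]
  have hz₀ : z₀ ∉ ball a r := fun h ↦ by
    have := infDist_le_infDist_add_dist (s := frontier D) (x := z₀) (y := a)
    linarith [mem_ball.1 h]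
  have hδ : 0 < infDist z (frontier D) := infDist_frontier_pos hD hne hzD
  have hGz := hG.le_neg_mul_of_mem_ball hD (subset_sdiff_singleton hball hz₀) hm
    (hGm a (hball (mem_ball_self hr)) haD) (z := z) (by rw [mem_ball]; linarith)
  rwa [← eq_sub_of_add_eq' hza] at hGz

lemma IsGreenFunction.exists_le_neg_mul_infDist_frontier (hG : IsGreenFunction D z₀ G)
    (hD : IsOpen D) (hbdd : Bornology.IsBounded D) (hz₀ : z₀ ∈ D) {K : ℝ}
    (hreg : IsProxRegularWith K (frontier D)) :
    ∃ κ > (0 : ℝ), ∀ z ∈ D, G z ≤ ((-(κ * infDist z (frontier D)) : ℝ) : EReal) := by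
  have hne : (frontier D).Nonempty := nonempty_frontier_of_isBounded hbdd ⟨z₀, hz₀⟩
  have hδ₀ : 0 < infDist z₀ (frontier D) := infDist_frontier_pos hD hne hz₀
  have hsmall : ∀ᶠ r in 𝓝 (0 : ℝ), 2 * r * K < 1 ∧ 2 * r < infDist z₀ (frontier D) :=
    .and ((Continuous.tendsto' (by fun_prop) 0 0 (by simp)).eventually_lt_const one_pos)
      ((Continuous.tendsto' (by fun_prop) 0 0 (by simp)).eventually_lt_const hδ₀)
  obtain ⟨r, hr, hrK, hrz₀⟩ := hsmall.exists_gt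
  obtain ⟨m, hm, hGm⟩ := hG.exists_le_neg_of_le_infDist_frontier hbdd hr
  have hdiam : 0 ≤ diam D := diam_nonneg
  refine ⟨m / (2 * r + diam D), by positivity, fun z hz ↦ ?_⟩
  have hδ : 0 ≤ infDist z (frontier D) := infDist_nonneg
  obtain hzr | hrz := le_total (infDist z (frontier D)) r
  · refine (hG.le_neg_mul_infDist_of_infDist_le hD hbdd hreg hr hrK.le hrz₀.le hm.le hGm hz
      hzr).trans (EReal.coe_le_coe ?_)
    gcongr
    linarith
  · refine (hGm z hz hrz).trans (EReal.coe_le_coe (neg_le_neg ?_))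
    have hδ_le : infDist z (frontier D) ≤ 2 * r + diam D :=
      (infDist_frontier_le_diam hbdd hz).trans (le_add_of_nonneg_left (by positivity))
    calc m / (2 * r + diam D) * infDist z (frontier D)
        ≤ m / (2 * r + diam D) * (2 * r + diam D) := by gcongr
      _ = m := div_mul_cancel₀ _ (by positivity)

end Green

section RegularRegion

variable {Γ : Set ℂ}

lemma IsAnalyticJordanCurve.isClosed (hΓ : IsAnalyticJordanCurve Γ) : IsClosed Γ := by
  obtain ⟨γ, hγ, hper, -, -, rfl⟩ := hΓ
  have hcont : Continuous γ := continuousOn_univ.1 hγ.continuousOn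
  exact (hper.compact_of_continuous Real.two_pi_pos.ne' hcont).isClosed

lemma IsAnalyticJordanCurve.isRegularCurveAt (hΓ : IsAnalyticJordanCurve Γ) {x : ℂ} (hx : x ∈ Γ) :
    IsRegularCurveAt Γ x := by
  obtain ⟨γ, hγ, hper, hderiv, hinj, rfl⟩ := hΓ
  obtain ⟨s, rfl⟩ := hx
  have hcont : Continuous γ := continuousOn_univ.1 hγ.continuousOn
  exact ⟨γ, s, (hγ s (mem_univ s)).contDiffAt, hderiv s, rfl,
    map_nhds_eq_nhdsWithin_range_of_periodic Real.two_pi_pos hcont hper hinj s⟩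

lemma nhdsWithin_iUnion_eq_of_pairwise_disjoint {X ι : Type*} [TopologicalSpace X] [Finite ι]
    {s : ι → Set X} (hs : ∀ i, IsClosed (s i)) (hdisj : Pairwise (Function.onFun Disjoint s))
    {i : ι} {x : X} (hx : x ∈ s i) : 𝓝[⋃ j, s j] x = 𝓝[s i] x := by
  rw [nhdsWithin_iUnion]
  refine le_antisymm (iSup_le fun j ↦ ?_) (le_iSup (fun j ↦ 𝓝[s j] x) i)
  obtain rfl | hij := eq_or_ne j i
  · exact le_rfl
  · have hxj : x ∉ closure (s j) := (hs j).closure_eq.symm ▸ (hdisj hij).notMem_of_mem_right hx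
    rw [notMem_closure_iff_nhdsWithin_eq_bot.1 hxj]
    exact bot_le

lemma IsRegularRegion.isRegularCurveAt_frontier {n : ℕ} {D : Set ℂ} (hD : IsRegularRegion n D)
    {x : ℂ} (hx : x ∈ frontier D) : IsRegularCurveAt (frontier D) x := by
  obtain ⟨-, -, -, Γ, hΓ, hdisj, hfr⟩ := hD
  obtain ⟨i, hi⟩ := mem_iUnion.1 (hfr ▸ hx)
  obtain ⟨γ, s, hγ, hs, hγs, hmap⟩ := (hΓ i).isRegularCurveAt hi
  refine ⟨γ, s, hγ, hs, hγs, ?_⟩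
  rw [hmap, hfr, nhdsWithin_iUnion_eq_of_pairwise_disjoint (fun j ↦ (hΓ j).isClosed) hdisj hi]

lemma IsRegularRegion.exists_isProxRegularWith_frontier {n : ℕ} {D : Set ℂ}
    (hD : IsRegularRegion n D) : ∃ K, IsProxRegularWith K (frontier D) :=
  exists_isProxRegularWith (isCompact_frontier_of_isBounded hD.2.2.1)
    fun _ hx ↦ hD.isRegularCurveAt_frontier hx

end RegularRegion

theorem green_superlevel_subset_psi_superlevel_general
    {D : Set ℂ} (hD : IsOpen D) (hbdd : Bornology.IsBounded D)
    {K : ℝ} (hreg : IsProxRegularWith K (frontier D))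
    {z₀ : ℂ} (hz₀ : z₀ ∈ D)
    {G : ℂ → EReal} (hG : IsGreenFunction D z₀ G)
    {ψ : ℂ → EReal} (hψbd : ∀ z ∈ frontier D, ψ z = 0)
    {U : Set ℂ} (hU : IsOpen U) (hUbd : frontier D ⊆ U)
    {ψC1 : ℂ → ℝ} (hψC1 : ContDiffOn ℝ 1 ψC1 U)
    (hψeq : ∀ z ∈ U ∩ closure D, ψ z = ((ψC1 z : ℝ) : EReal)) :
    ∃ t₀ > (0:ℝ), ∃ C > (1:ℝ), ∀ t : ℝ, 0 < t → t < t₀ →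
      {z | z ∈ D ∧ ((-t : ℝ) : EReal) ≤ G z} ⊆
        {z | z ∈ D ∧ ((-(C * t) : ℝ) : EReal) ≤ ψ z} := by
  obtain ⟨κ, hκ, hGκ⟩ := hG.exists_le_neg_mul_infDist_frontier hD hbdd hz₀ hreg
  obtain ⟨L, d, hd, hψL⟩ := exists_neg_mul_infDist_frontier_le hbdd hψbd hU hUbd hψC1 hψeq
  refine ⟨κ * d, mul_pos hκ hd, max 2 (L / κ), lt_max_of_lt_left one_lt_two,
    fun t _ htd z ⟨hzD, hGz⟩ ↦ ⟨hzD, ?_⟩⟩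
  have hκt : κ * infDist z (frontier D) ≤ t :=
    le_of_neg_le_neg (EReal.coe_le_coe_iff.1 (hGz.trans (hGκ z hzD)))
  have hδd : infDist z (frontier D) < d := lt_of_mul_lt_mul_left (hκt.trans_lt htd) hκ.le
  have hLC : L * infDist z (frontier D) ≤ max 2 (L / κ) * t :=
    calc L * infDist z (frontier D) = L / κ * (κ * infDist z (frontier D)) := by field_simp
      _ ≤ max 2 (L / κ) * t :=
        mul_le_mul (le_max_right _ _) hκt (mul_nonneg hκ.le infDist_nonneg) (by positivity)
  exact (EReal.coe_le_coe (neg_le_neg hLC)).trans (hψL z hzD hδd)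

/-- comparison of superlevel sets of `G_D(·,z₀)` and `ψ`:
there are `t₀ > 0` and `C > 1` with
`{G_D(·,z₀) ≥ -t} ⊆ {ψ ≥ -Ct}` for all `t ∈ (0,t₀)`. -/
theorem green_superlevel_subset_psi_superlevel
    (n : ℕ) (D : Set ℂ) (hD : IsRegularRegion n D)
    (z₀ : ℂ) (hz₀ : z₀ ∈ D)
    (G : ℂ → EReal) (hG : IsGreenFunction D z₀ G)
    (ν : ℂ → ℂ) (hν : IsOutwardUnitNormal D ν)
    (ψ : ℂ → EReal)
    (hψmeas : Measurable ψ) (hψsh : SubharmonicOnE ψ D)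
    (hψbd : ∀ z ∈ frontier D, ψ z = 0)
    (hψlel : 0 < lelongNumber ψ z₀)
    (U : Set ℂ) (hU : IsOpen U) (hUbd : frontier D ⊆ U)
    (ψC1 : ℂ → ℝ) (hψC1 : ContDiffOn ℝ 1 ψC1 U)
    (hψeq : ∀ z ∈ U ∩ closure D, ψ z = ((ψC1 z : ℝ) : EReal))
    (hνpos : ∀ z ∈ frontier D, 0 < fderiv ℝ ψC1 z (ν z)) :
    ∃ t₀ > (0:ℝ), ∃ C > (1:ℝ), ∀ t : ℝ, 0 < t → t < t₀ →
      {z | z ∈ D ∧ ((-t : ℝ) : EReal) ≤ G z} ⊆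
        {z | z ∈ D ∧ ((-(C * t) : ℝ) : EReal) ≤ ψ z} := by
  obtain ⟨K, hK⟩ := hD.exists_isProxRegularWith_frontier
  exact green_superlevel_subset_psi_superlevel_general hD.1 hD.2.2.1 hK hz₀ hG hψbd hU hUbd hψC1
    hψeq
end

section
/- Let f be a holomorphic function on D such that liminf_{r→1⁻} ( ∫_{{z ∈ D : ψ(z) ≥ log r}} |f(z)|² dλ(z) ) / (1 − r) < +∞, where dλ is Lebesgue measure. Then f belongs to the analytic Hardy class H₂^(c)(D), i.e. |f|² admits a harmonic majorant on D. -/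
open MeasureTheory Metric Complex Set Filter

/-!
The function `ψ` is negative in `D` by the strong maximum principle, since it vanishes on `∂D` and
is not constant near its logarithmic pole. Given a compact `E ⊆ D`, truncate it to
`ρ = max ψ (c‖z‖² - q)`: this is a bounded subharmonic exhaustion, strictly subharmonic on `E`, and
equal to `ψ`, hence Lipschitz, near `∂D`. Circle averages are self-adjoint, so testing the
subharmonicity of `v ≥ 0` against a cutoff of `ρ` between the levels `-2ε` and `-ε` gives
`c ∫_E v ≤ L² / (2ε) ∫_{ρ ≥ -3ε} v`. With `ε = -(log r) / 3` the finiteness of the liminf bounds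
`∫_E v`, uniformly over all subharmonic `v ≥ 0` that agree with `|f|²` off a compact subset of `D`.
Poisson modifications of `|f|²` on the discs of a countable cover stay in this class; iterating
them produces an increasing, locally bounded sequence whose limit is a harmonic majorant.
-/

open Real (circleAverage)
open InnerProductSpace (HarmonicOnNhd)
open scoped Topology

/-! ### Harmonic functions and the weak maximum principle -/

lemma harmonicOnNhd_re_of_differentiableOn {F : ℂ → ℂ} {s : Set ℂ} (hs : IsOpen s)
    (hF : DifferentiableOn ℂ F s) : HarmonicOnNhd (fun z ↦ (F z).re) s := fun _ hz ↦
  (hF.analyticAt (hs.mem_nhds hz)).harmonicAt_re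

lemma harmonicOnNhd_congr {u v : ℂ → ℝ} {s : Set ℂ} (hs : IsOpen s)
    (hu : HarmonicOnNhd u s) (h : EqOn u v s) : HarmonicOnNhd v s := fun z hz ↦
  (InnerProductSpace.harmonicAt_congr_nhds (h.eventuallyEq_of_mem (hs.mem_nhds hz))).1 (hu z hz)

lemma HarmonicOnD.of_harmonicOnNhd {u : ℂ → ℝ} {s : Set ℂ} (hs : IsOpen s)
    (hu : HarmonicOnNhd u s) : HarmonicOnD u s := by
  intro z hz
  obtain ⟨r, hr, hrs⟩ := Metric.isOpen_iff.1 hs z hz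
  obtain ⟨F, hF, hFu⟩ := (hu.mono hrs).exists_analyticOnNhd_ball_re_eq
  exact ⟨r, hr, hrs, F, hF.differentiableOn, fun w hw ↦ (hFu hw).symm⟩

lemma harmonicOnNhd_add_re_mul_sub (b : ℝ) (a ζ : ℂ) (s : Set ℂ) :
    HarmonicOnNhd (fun w ↦ b + (a * (w - ζ)).re) s := by
  have h := harmonicOnNhd_re_of_differentiableOn (F := fun w ↦ b + a * (w - ζ)) isOpen_univ
    (by fun_prop)
  simp only [add_re, ofReal_re] at h
  exact h.mono (subset_univ s)

lemma circleAverage_norm_sq (z : ℂ) (r : ℝ) :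
    circleAverage (fun w : ℂ ↦ ‖w‖ ^ 2) z r = ‖z‖ ^ 2 + r ^ 2 := by
  have h_affine : EqOn (fun w : ℂ ↦ ‖w‖ ^ 2)
      (fun w ↦ (‖z‖ ^ 2 + r ^ 2) + (2 * (starRingEnd ℂ) z * (w - z)).re) (sphere z |r|) := by
    intro w hw
    have hr : ‖w - z‖ ^ 2 = r ^ 2 := by rw [← dist_eq_norm, mem_sphere.1 hw, sq_abs]
    simp only [← Complex.normSq_eq_norm_sq, Complex.normSq_apply, sub_re, sub_im, mul_re,
      mul_im, conj_re, conj_im, re_ofNat, im_ofNat] at hr ⊢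
    linarith
  rw [Real.circleAverage_congr_sphere h_affine,
    (harmonicOnNhd_add_re_mul_sub _ _ _ _).circleAverage_eq]
  simp

/-- Adding `η‖z‖²` makes the submean inequality strict, so that the maximum of the sum cannot be
attained where the function is positive. -/
lemma nonpos_of_le_circleAverage {K : Set ℂ} (hK : IsCompact K) {v : ℂ → ℝ}
    (hv : ContinuousOn v K)
    (h : ∀ z ∈ K, v z ≤ 0 ∨ ∃ r > 0, sphere z r ⊆ K ∧ v z ≤ circleAverage v z r) :
    ∀ z ∈ K, v z ≤ 0 := by
  obtain ⟨B, hB⟩ := hK.isBounded.exists_norm_le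
  intro x hx
  by_contra! hpos
  obtain ⟨η, hη, hηB⟩ : ∃ η > 0, η * B ^ 2 < v x := by
    refine ⟨v x / (B ^ 2 + 1), by positivity, ?_⟩
    rw [div_mul_eq_mul_div, div_lt_iff₀ (by positivity)]
    linarith
  have hn : Continuous fun z : ℂ ↦ η * ‖z‖ ^ 2 := by fun_prop
  obtain ⟨p, hpK, hp⟩ := hK.exists_isMaxOn ⟨x, hx⟩ (hv.add hn.continuousOn)
  have hvp : 0 < v p := by
    have hxp : v x + η * ‖x‖ ^ 2 ≤ v p + η * ‖p‖ ^ 2 := hp hx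
    have hpB : η * ‖p‖ ^ 2 ≤ η * B ^ 2 := by gcongr; exact hB p hpK
    have : 0 ≤ η * ‖x‖ ^ 2 := by positivity
    linarith
  obtain ⟨r, hr, hrK, hmean⟩ := (h p hpK).resolve_left hvp.not_ge
  have hiv : CircleIntegrable v p r := (hv.mono hrK).circleIntegrable hr.le
  have hin : CircleIntegrable (fun z : ℂ ↦ η * ‖z‖ ^ 2) p r :=
    hn.continuousOn.circleIntegrable hr.le
  have hmax : circleAverage (v + fun z ↦ η * ‖z‖ ^ 2) p r ≤ v p + η * ‖p‖ ^ 2 :=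
    Real.circleAverage_mono_on_of_le_circle (hiv.add hin)
      fun z hz ↦ hp (hrK (by rwa [abs_of_pos hr] at hz))
  have hquad : circleAverage (fun z : ℂ ↦ η * ‖z‖ ^ 2) p r = η * (‖p‖ ^ 2 + r ^ 2) := by
    rw [← circleAverage_norm_sq p r]
    exact Real.circleAverage_fun_smul (a := η)
  rw [Real.circleAverage_add hiv hin, hquad] at hmax
  have : 0 < η * r ^ 2 := by positivity
  linarith

/-! ### The Poisson integral on a disc -/

/-- The Poisson integral over the disc `ball c R` of the boundary values of `g` on
`sphere c R`. -/
noncomputable def poissonIntegral (g : ℂ → ℝ) (c : ℂ) (R : ℝ) (w : ℂ) : ℝ :=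
  circleAverage (poissonKernel c w • g) c R

section PoissonIntegral

variable {g : ℂ → ℝ} {c w : ℂ} {R : ℝ}

lemma harmonicOnNhd_poissonIntegral (hg : CircleIntegrable g c R) :
    HarmonicOnNhd (poissonIntegral g c R) (ball c R) := by
  have hg₀ : CircleIntegrable (fun z ↦ g (z + c)) 0 R := by
    simpa [CircleIntegrable, circleMap, add_comm] using hg
  have hgℂ : CircleIntegrable (fun z ↦ (g (z + c) : ℂ)) 0 R := by
    simp only [CircleIntegrable, intervalIntegrable_iff] at hg₀ ⊢
    exact Complex.ofRealCLM.integrable_comp hg₀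
  have hmaps : MapsTo (fun w ↦ w - c) (ball c R) (ball 0 R) := fun w hw ↦ by
    simpa [dist_eq_norm] using hw
  refine harmonicOnNhd_congr isOpen_ball
    (harmonicOnNhd_re_of_differentiableOn isOpen_ball
      ((differentiableOn_circleAverage_herglotzRieszKernel_smul hgℂ).comp
        (differentiableOn_id.sub_const c) hmaps)) fun w hw ↦ ?_
  rw [Function.comp_apply, id, re_circleAverage_herglotzRieszKernel_smul hg₀ (hmaps hw),
    poissonIntegral, ← Real.circleAverage_map_add_const (c := c)]
  congr 1
  ext z
  simp [poissonKernel_eq_re_herglotzRieszKernel, herglotzRieszKernel_add_const]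

lemma poissonIntegral_center (g : ℂ → ℝ) (c : ℂ) (hR : R ≠ 0) :
    poissonIntegral g c R c = circleAverage g c R := by
  refine Real.circleAverage_congr_sphere fun z hz ↦ ?_
  rw [mem_sphere, dist_eq_norm] at hz
  simp [poissonKernel_def, hz, hR]

lemma poissonIntegral_neg (g : ℂ → ℝ) (c : ℂ) (R : ℝ) :
    poissonIntegral (-g) c R = -poissonIntegral g c R := by
  ext w
  rw [Pi.neg_apply, poissonIntegral, poissonIntegral, smul_neg,
    ← neg_one_smul ℝ (poissonKernel c w • g), Real.circleAverage_smul, neg_one_smul]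

lemma poissonKernel_nonneg {z : ℂ} (hw : w ∈ ball c R) (hz : z ∈ sphere c R) :
    0 ≤ poissonKernel c w z := by
  rw [mem_sphere, dist_eq_norm] at hz
  rw [mem_ball, dist_eq_norm] at hw
  rw [poissonKernel_def, hz]
  have : ‖w - c‖ ^ 2 ≤ R ^ 2 := by gcongr
  exact div_nonneg (sub_nonneg.2 this) (sq_nonneg _)

lemma continuousOn_poissonKernel (hw : w ∈ ball c R) :
    ContinuousOn (poissonKernel c w) (sphere c |R|) := by
  rw [poissonKernel_eq_re_herglotzRieszKernel]
  exact Complex.continuous_re.comp_continuousOn (continuousOn_herglotzRieszKernel_sphere hw)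

lemma circleIntegrable_poissonKernel_smul (hg : CircleIntegrable g c R) (hw : w ∈ ball c R) :
    CircleIntegrable (poissonKernel c w • g) c R :=
  hg.continuousOn_smul (continuousOn_poissonKernel hw)

lemma poissonIntegral_mono {g₁ g₂ : ℂ → ℝ} (hg₁ : CircleIntegrable g₁ c R)
    (hg₂ : CircleIntegrable g₂ c R) (hw : w ∈ ball c R) (h : ∀ z ∈ sphere c R, g₁ z ≤ g₂ z) :
    poissonIntegral g₁ c R w ≤ poissonIntegral g₂ c R w := by
  refine Real.circleAverage_mono (circleIntegrable_poissonKernel_smul hg₁ hw)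
    (circleIntegrable_poissonKernel_smul hg₂ hw)
    fun z hz ↦ ?_
  rw [abs_of_pos (pos_of_mem_ball hw)] at hz
  exact mul_le_mul_of_nonneg_left (h z hz) (poissonKernel_nonneg hw hz)

lemma re_mul_sub_eq_of_mem_sphere {z ζ : ℂ} (hz : z ∈ sphere c R) (hζ : ζ ∈ sphere c R) (k : ℝ) :
    (((-(k * 2) : ℝ) : ℂ) * (starRingEnd ℂ) (ζ - c) * (z - ζ)).re = k * dist z ζ ^ 2 := by
  have h : ‖z - c‖ ^ 2 = ‖ζ - c‖ ^ 2 := by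
    rw [← dist_eq_norm, ← dist_eq_norm, mem_sphere.1 hz, mem_sphere.1 hζ]
  rw [dist_eq_norm]
  simp only [← Complex.normSq_eq_norm_sq, Complex.normSq_apply, sub_re, sub_im] at h
  simp only [← Complex.normSq_eq_norm_sq, Complex.normSq_apply, sub_re, sub_im,
    mul_re, mul_im, conj_re, conj_im, ofReal_re, ofReal_im]
  linear_combination -k * h

/-- The affine function `2 Re (conj (ζ - c) * (ζ - z))` equals `‖z - ζ‖²` on the circle, hence is a
barrier at `ζ`: some multiple of it dominates `g - b` on the circle for any given `b > g ζ`, and the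
Poisson integral reproduces it. -/
lemma eventually_poissonIntegral_lt (hg : ContinuousOn g (sphere c R)) {ζ : ℂ}
    (hζ : ζ ∈ sphere c R) {a : ℝ} (ha : g ζ < a) :
    ∀ᶠ w in 𝓝[ball c R] ζ, poissonIntegral g c R w < a := by
  obtain ⟨b, hb, hba⟩ := exists_between ha
  obtain ⟨M, hM⟩ := (isCompact_sphere c R).exists_bound_of_continuousOn hg
  obtain ⟨η, hη, hgη⟩ := Metric.eventually_nhds_iff.1
    (eventually_nhdsWithin_iff.1 ((hg ζ hζ).eventually_lt_const hb))
  set N : ℝ := |M| + |b|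
  set barrier : ℂ → ℝ :=
    fun z ↦ b + (((-(N / η ^ 2 * 2) : ℝ) : ℂ) * (starRingEnd ℂ) (ζ - c) * (z - ζ)).re
    with h_barrier
  have h_harm : HarmonicOnNhd barrier (closedBall c R) := harmonicOnNhd_add_re_mul_sub _ _ _ _
  have h_sphere (z : ℂ) (hz : z ∈ sphere c R) : barrier z = b + N / η ^ 2 * dist z ζ ^ 2 :=
    congrArg (b + ·) (re_mul_sub_eq_of_mem_sphere hz hζ _)
  have h_le : ∀ z ∈ sphere c R, g z ≤ barrier z := by
    intro z hz
    rw [h_sphere z hz]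
    rcases lt_or_ge (dist z ζ) η with hzζ | hzζ
    · have hgz : g z < b := hgη hzζ hz
      have : 0 ≤ N / η ^ 2 * dist z ζ ^ 2 := by positivity
      linarith
    · have h_far : N ≤ N / η ^ 2 * dist z ζ ^ 2 := by
        rw [div_mul_eq_mul_div, le_div_iff₀ (by positivity)]
        gcongr
      linarith [(le_abs_self _).trans (hM z hz), le_abs_self M, neg_abs_le b]
  have h_lim : ∀ᶠ w in 𝓝[ball c R] ζ, barrier w < a := by
    have : Tendsto barrier (𝓝 ζ) (𝓝 (barrier ζ)) := Continuous.tendsto (by fun_prop) ζ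
    refine (this.mono_left nhdsWithin_le_nhds).eventually_lt_const ?_
    simpa [h_barrier] using hba
  filter_upwards [h_lim, self_mem_nhdsWithin] with w hwa hw
  have hR : 0 ≤ R := (pos_of_mem_ball hw).le
  calc poissonIntegral g c R w ≤ poissonIntegral barrier c R w :=
        poissonIntegral_mono (hg.circleIntegrable hR)
          ((h_harm.continuousOn.mono sphere_subset_closedBall).circleIntegrable hR) hw h_le
    _ = barrier w := h_harm.circleAverage_poissonKernel_smul hw
    _ < a := hwa

lemma tendsto_poissonIntegral (hg : ContinuousOn g (sphere c R)) {ζ : ℂ}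
    (hζ : ζ ∈ sphere c R) :
    Tendsto (poissonIntegral g c R) (𝓝[ball c R] ζ) (𝓝 (g ζ)) := by
  refine tendsto_order.2 ⟨fun a ha ↦ ?_, fun a ha ↦ eventually_poissonIntegral_lt hg hζ ha⟩
  filter_upwards [eventually_poissonIntegral_lt hg.neg hζ (neg_lt_neg ha)] with w hw
  rwa [poissonIntegral_neg, Pi.neg_apply, neg_lt_neg_iff] at hw

end PoissonIntegral

open scoped Classical in
/-- The Poisson modification of `g`: replace `g` on the disc `ball c R` by the Poisson integral of
its values on the boundary circle. -/
noncomputable def poissonModification (g : ℂ → ℝ) (c : ℂ) (R : ℝ) : ℂ → ℝ :=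
  (ball c R).piecewise (poissonIntegral g c R) g

section PoissonModification

variable {g : ℂ → ℝ} {c w : ℂ} {R : ℝ} {s : Set ℂ}

lemma poissonModification_of_mem (hw : w ∈ ball c R) :
    poissonModification g c R w = poissonIntegral g c R w := by
  classical exact piecewise_eq_of_mem _ _ _ hw

lemma poissonModification_of_notMem (hw : w ∉ ball c R) :
    poissonModification g c R w = g w := by
  classical exact piecewise_eq_of_notMem _ _ _ hw

lemma harmonicOnNhd_poissonModification (hR : 0 ≤ R) (hg : ContinuousOn g (sphere c R)) :
    HarmonicOnNhd (poissonModification g c R) (ball c R) :=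
  harmonicOnNhd_congr isOpen_ball (harmonicOnNhd_poissonIntegral (hg.circleIntegrable hR))
    fun _ hz ↦ (poissonModification_of_mem hz).symm

lemma continuousOn_poissonModification (hR : 0 < R) (hg : ContinuousOn g s)
    (hs : closedBall c R ⊆ s) : ContinuousOn (poissonModification g c R) s := by
  have hg_sphere : ContinuousOn g (sphere c R) := hg.mono (sphere_subset_closedBall.trans hs)
  classical
  refine ContinuousOn.piecewise' (fun ζ hζ ↦ ?_) (fun ζ hζ ↦ ?_) ?_ (hg.mono inter_subset_left)
  · rw [frontier_ball c hR.ne'] at hζ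
    rw [piecewise_eq_of_notMem _ _ _ (sphere_disjoint_ball.notMem_of_mem_left hζ.2)]
    exact (tendsto_poissonIntegral hg_sphere hζ.2).mono_left (nhdsWithin_mono _ inter_subset_right)
  · rw [frontier_ball c hR.ne'] at hζ
    rw [piecewise_eq_of_notMem _ _ _ (sphere_disjoint_ball.notMem_of_mem_left hζ.2)]
    exact (hg ζ hζ.1).mono_left (nhdsWithin_mono _ inter_subset_left)
  · exact (harmonicOnNhd_poissonIntegral
      (hg_sphere.circleIntegrable hR.le)).continuousOn.mono inter_subset_right

end PoissonModification

/-! ### Continuous subharmonic functions -/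

/-- Continuous subharmonic functions, encoded by the submean inequality on all sufficiently small
circles around each point. -/
structure ContSubharmonicOn (v : ℂ → ℝ) (s : Set ℂ) : Prop where
  continuousOn : ContinuousOn v s
  eventually_le_circleAverage : ∀ z ∈ s, ∀ᶠ r in 𝓝[>] (0 : ℝ), v z ≤ circleAverage v z r

lemma circleIntegrable_of_closedBall_subset {v : ℂ → ℝ} {s : Set ℂ} (hv : ContinuousOn v s)
    {c : ℂ} {R : ℝ} (hR : 0 ≤ R) (hs : closedBall c R ⊆ s) : CircleIntegrable v c R :=
  (hv.mono (sphere_subset_closedBall.trans hs)).circleIntegrable hR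

lemma eventually_nhdsGT_zero_closedBall_subset {s : Set ℂ} (hs : IsOpen s) {z : ℂ} (hz : z ∈ s) :
    ∀ᶠ r in 𝓝[>] (0 : ℝ), closedBall z r ⊆ s :=
  nhdsWithin_le_nhds (eventually_closedBall_subset (hs.mem_nhds hz))

lemma contSubharmonicOn_norm_sq {f : ℂ → ℂ} {s : Set ℂ} (hs : IsOpen s)
    (hf : DifferentiableOn ℂ f s) : ContSubharmonicOn (fun z ↦ ‖f z‖ ^ 2) s where
  continuousOn := hf.continuousOn.norm.pow 2
  eventually_le_circleAverage z hz := by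
    set h : ℂ → ℝ := fun w ↦
      (((‖f z‖ ^ 2 : ℝ) : ℂ) + 2 * (starRingEnd ℂ) (f z) * (f w - f z)).re with h_def
    have h_harm : HarmonicOnNhd h s := harmonicOnNhd_re_of_differentiableOn hs
      (((hf.sub_const (f z)).const_mul (2 * (starRingEnd ℂ) (f z))).const_add _)
    have h_le (w : ℂ) : h w ≤ ‖f w‖ ^ 2 := by
      have : ‖f w‖ ^ 2 - h w = ‖f w - f z‖ ^ 2 := by
        simp only [h_def, ← Complex.normSq_eq_norm_sq, Complex.normSq_apply, add_re, ofReal_re,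
          sub_re, sub_im, mul_re, mul_im, conj_re, conj_im, re_ofNat, im_ofNat]
        ring
      linarith [sq_nonneg ‖f w - f z‖]
    filter_upwards [eventually_nhdsGT_zero_closedBall_subset hs hz, self_mem_nhdsWithin]
      with r hrs hr
    rw [mem_Ioi] at hr
    calc ‖f z‖ ^ 2 = h z := by simp [h_def, -ofReal_pow]
      _ = circleAverage h z r :=
        ((h_harm.mono (by rwa [abs_of_pos hr])).circleAverage_eq).symm
      _ ≤ circleAverage (fun w ↦ ‖f w‖ ^ 2) z r := Real.circleAverage_mono
        (circleIntegrable_of_closedBall_subset h_harm.continuousOn hr.le hrs)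
        (circleIntegrable_of_closedBall_subset (hf.continuousOn.norm.pow 2) hr.le hrs)
        fun w _ ↦ h_le w

namespace ContSubharmonicOn

variable {v : ℂ → ℝ} {s : Set ℂ} {c : ℂ} {R : ℝ}

lemma le_poissonIntegral (hv : ContSubharmonicOn v s) (hs : closedBall c R ⊆ s)
    {w : ℂ} (hw : w ∈ ball c R) : v w ≤ poissonIntegral v c R w := by
  have hR : 0 < R := pos_of_mem_ball hw
  set P := poissonModification v c R
  have hv_cont : ContinuousOn v (closedBall c R) := hv.continuousOn.mono hs
  have hP_cont : ContinuousOn P (closedBall c R) :=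
    (continuousOn_poissonModification hR hv.continuousOn hs).mono hs
  have hP_harm : HarmonicOnNhd P (ball c R) :=
    harmonicOnNhd_poissonModification hR.le (hv_cont.mono sphere_subset_closedBall)
  rw [← poissonModification_of_mem hw, ← sub_nonpos]
  refine nonpos_of_le_circleAverage (isCompact_closedBall c R) (hv_cont.sub hP_cont)
    (fun z hz ↦ ?_) w (ball_subset_closedBall hw)
  by_cases hzb : z ∈ ball c R
  · obtain ⟨r, hvr, hr, hrb⟩ := ((hv.eventually_le_circleAverage z (hs hz)).and
      (eventually_mem_nhdsWithin.and
        (eventually_nhdsGT_zero_closedBall_subset isOpen_ball hzb))).exists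
    rw [mem_Ioi] at hr
    have hrc : closedBall z r ⊆ closedBall c R := hrb.trans ball_subset_closedBall
    refine Or.inr ⟨r, hr, sphere_subset_closedBall.trans hrc, ?_⟩
    rw [Real.circleAverage_sub (circleIntegrable_of_closedBall_subset hv_cont hr.le hrc)
      (circleIntegrable_of_closedBall_subset hP_cont hr.le hrc),
      (hP_harm.mono (by rwa [abs_of_pos hr])).circleAverage_eq]
    exact sub_le_sub_right hvr _
  · exact Or.inl (by simp [P, poissonModification_of_notMem hzb])

lemma le_circleAverage (hv : ContSubharmonicOn v s) (hR : 0 < R) (hs : closedBall c R ⊆ s) :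
    v c ≤ circleAverage v c R :=
  poissonIntegral_center v c hR.ne' ▸ hv.le_poissonIntegral hs (mem_ball_self hR)

lemma le_poissonModification (hv : ContSubharmonicOn v s) (hs : closedBall c R ⊆ s) (w : ℂ) :
    v w ≤ poissonModification v c R w := by
  by_cases hw : w ∈ ball c R
  · exact poissonModification_of_mem hw ▸ hv.le_poissonIntegral hs hw
  · exact (poissonModification_of_notMem hw).ge

lemma poissonModification (hv : ContSubharmonicOn v s) (hso : IsOpen s) (hR : 0 < R)
    (hs : closedBall c R ⊆ s) : ContSubharmonicOn (poissonModification v c R) s where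
  continuousOn := continuousOn_poissonModification hR hv.continuousOn hs
  eventually_le_circleAverage z hz := by
    by_cases hzb : z ∈ ball c R
    · have h_harm := harmonicOnNhd_poissonModification hR.le
        (hv.continuousOn.mono (sphere_subset_closedBall.trans hs))
      filter_upwards [eventually_nhdsGT_zero_closedBall_subset isOpen_ball hzb, self_mem_nhdsWithin]
        with r hrb hr
      rw [(h_harm.mono (by rwa [abs_of_pos hr])).circleAverage_eq]
    · filter_upwards [eventually_nhdsGT_zero_closedBall_subset hso hz, self_mem_nhdsWithin]
        with r hrs hr
      rw [mem_Ioi] at hr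
      rw [poissonModification_of_notMem hzb]
      refine (hv.le_circleAverage hr hrs).trans (Real.circleAverage_mono
        (circleIntegrable_of_closedBall_subset hv.continuousOn hr.le hrs)
        (circleIntegrable_of_closedBall_subset
          (continuousOn_poissonModification hR hv.continuousOn hs) hr.le hrs)
        fun w _ ↦ hv.le_poissonModification hs w)

end ContSubharmonicOn

/-! ### The area submean inequality -/

lemma lintegral_ball_eq_lintegral_circleMap {f : ℂ → ENNReal} (hf : Measurable f) (c : ℂ) (R : ℝ) :
    ∫⁻ z in ball c R, f z =
      ∫⁻ r in Ioo 0 R, ∫⁻ θ in Ioo (-Real.pi) Real.pi, ENNReal.ofReal r * f (circleMap c r θ) := by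
  have h_prod : (volume : Measure (ℝ × ℝ)).restrict polarCoord.target =
      (volume.restrict (Ioi 0)).prod (volume.restrict (Ioo (-Real.pi) Real.pi)) := by
    rw [polarCoord_target, Measure.prod_restrict, Measure.volume_eq_prod]
  have h_map (p : ℝ × ℝ) : c + Complex.polarCoord.symm p = circleMap c p.1 p.2 := by
    rw [Complex.polarCoord_symm_apply, circleMap, Complex.exp_mul_I, ofReal_cos, ofReal_sin]
  have h_ball {r : ℝ} (hr : 0 < r) (θ : ℝ) :
      (ball c R).indicator f (circleMap c r θ) = if r < R then f (circleMap c r θ) else 0 := by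
    have h_mem : circleMap c r θ ∈ ball c R ↔ r < R := by simp [dist_eq_norm, abs_of_pos hr]
    classical simp only [Set.indicator_apply, h_mem]
  calc ∫⁻ z in ball c R, f z = ∫⁻ z, (ball c R).indicator f (c + z) := by
        rw [← lintegral_indicator measurableSet_ball, lintegral_add_left_eq_self]
    _ = ∫⁻ p, ENNReal.ofReal p.1 * (ball c R).indicator f (circleMap c p.1 p.2)
          ∂((volume.restrict (Ioi 0)).prod (volume.restrict (Ioo (-Real.pi) Real.pi))) := by
        simp only [← Complex.lintegral_comp_polarCoord_symm, h_prod, h_map, smul_eq_mul]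
    _ = ∫⁻ r in Ioi 0, ∫⁻ θ in Ioo (-Real.pi) Real.pi,
          ENNReal.ofReal r * (ball c R).indicator f (circleMap c r θ) := by
        refine lintegral_prod _ (Measurable.aemeasurable ?_)
        exact measurable_fst.ennreal_ofReal.mul ((hf.indicator measurableSet_ball).comp
          (by unfold circleMap; fun_prop))
    _ = ∫⁻ r in Ioi 0, (Iio R).indicator (fun r ↦ ∫⁻ θ in Ioo (-Real.pi) Real.pi,
          ENNReal.ofReal r * f (circleMap c r θ)) r := by
        refine setLIntegral_congr_fun measurableSet_Ioi fun r hr ↦ ?_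
        by_cases hrR : r < R <;> simp [h_ball (mem_Ioi.1 hr), hrR]
    _ = _ := by
        rw [lintegral_indicator measurableSet_Iio, Measure.restrict_restrict measurableSet_Iio,
          Iio_inter_Ioi]

lemma ofReal_mul_circleAverage_eq_lintegral {v : ℂ → ℝ} {c : ℂ} {r : ℝ}
    (hv : ContinuousOn v (sphere c |r|)) (hnonneg : ∀ z ∈ sphere c |r|, 0 ≤ v z) :
    ENNReal.ofReal (2 * Real.pi * circleAverage v c r) =
      ∫⁻ θ in Ioo (-Real.pi) Real.pi, ENNReal.ofReal (v (circleMap c r θ)) := by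
  have h_cont : Continuous fun θ ↦ v (circleMap c r θ) :=
    hv.comp_continuous (continuous_circleMap c r) (circleMap_mem_sphere' c r)
  rw [← ofReal_integral_eq_lintegral_ofReal
    ((h_cont.integrableOn_Icc (a := -Real.pi) (b := Real.pi)).mono_set Ioo_subset_Icc_self)
    (ae_of_all _ fun θ ↦ hnonneg _ (circleMap_mem_sphere' c r θ)),
    ← integral_Ioc_eq_integral_Ioo,
    ← intervalIntegral.integral_of_le (by linarith [Real.pi_pos]),
    Real.circleAverage_eq_integral_add (-Real.pi),
    intervalIntegral.integral_comp_add_right fun θ ↦ v (circleMap c r θ), smul_eq_mul,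
    mul_inv_cancel_left₀ (by positivity)]
  ring_nf

lemma ContSubharmonicOn.ofReal_mul_le_lintegral {v : ℂ → ℝ} {s : Set ℂ} {c : ℂ} {R : ℝ}
    (hv : ContSubharmonicOn v s) (hnonneg : ∀ z ∈ s, 0 ≤ v z) (hR : 0 ≤ R)
    (hs : closedBall c R ⊆ s) :
    ENNReal.ofReal (Real.pi * R ^ 2 * v c) ≤ ∫⁻ z in ball c R, ENNReal.ofReal (v z) := by
  classical
  set g : ℂ → ℝ := (ball c R).piecewise v 0
  have hg : Measurable g := (hv.continuousOn.mono (ball_subset_closedBall.trans hs)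
    ).measurable_piecewise continuousOn_const measurableSet_ball
  have hgv : EqOn v g (ball c R) := fun z hz ↦ (piecewise_eq_of_mem _ _ _ hz).symm
  have h_circle : ∀ r ∈ Ioo 0 R, ENNReal.ofReal r * ENNReal.ofReal (2 * Real.pi * v c) ≤
      ∫⁻ θ in Ioo (-Real.pi) Real.pi, ENNReal.ofReal r * ENNReal.ofReal (g (circleMap c r θ)) := by
    intro r ⟨hr, hrR⟩
    have hrs : closedBall c r ⊆ s := (closedBall_subset_closedBall hrR.le).trans hs
    have hsphere : sphere c |r| ⊆ s := by
      rw [abs_of_pos hr]; exact sphere_subset_closedBall.trans hrs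
    have hgθ (θ : ℝ) : v (circleMap c r θ) = g (circleMap c r θ) :=
      hgv (by simpa [dist_eq_norm, abs_of_pos hr] using hrR)
    rw [lintegral_const_mul _ (by fun_prop)]
    simp only [← hgθ]
    rw [← ofReal_mul_circleAverage_eq_lintegral (hv.continuousOn.mono hsphere)
      fun z hz ↦ hnonneg z (hsphere hz)]
    gcongr
    exact hv.le_circleAverage hr hrs
  calc ENNReal.ofReal (Real.pi * R ^ 2 * v c)
      = (∫⁻ r in Ioo 0 R, ENNReal.ofReal r) * ENNReal.ofReal (2 * Real.pi * v c) := by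
        rw [← ofReal_integral_eq_lintegral_ofReal, ← integral_Ioc_eq_integral_Ioo,
          ← intervalIntegral.integral_of_le hR, integral_id, zero_pow two_ne_zero, sub_zero,
          ← ENNReal.ofReal_mul (by positivity)]
        · congr 1; ring
        · exact continuous_id.integrableOn_Icc.mono_set Ioo_subset_Icc_self
        · exact (ae_restrict_mem measurableSet_Ioo).mono fun r hr ↦ hr.1.le
    _ ≤ ∫⁻ r in Ioo 0 R, ∫⁻ θ in Ioo (-Real.pi) Real.pi,
          ENNReal.ofReal r * ENNReal.ofReal (g (circleMap c r θ)) := by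
        rw [← lintegral_mul_const _ (by fun_prop)]
        exact setLIntegral_mono' measurableSet_Ioo h_circle
    _ = ∫⁻ z in ball c R, ENNReal.ofReal (v z) := by
        rw [← lintegral_ball_eq_lintegral_circleMap (f := fun z ↦ ENNReal.ofReal (g z))
          (by fun_prop)]
        exact setLIntegral_congr_fun measurableSet_ball fun z hz ↦ by rw [hgv hz]

/-! ### Balayage -/

lemma circleIntegrable_of_norm_le {g : ℂ → ℝ} {c : ℂ} {R B : ℝ}
    (hg : Measurable fun θ ↦ g (circleMap c R θ)) (hB : ∀ z ∈ sphere c |R|, ‖g z‖ ≤ B) :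
    CircleIntegrable g c R := by
  rw [CircleIntegrable, intervalIntegrable_iff]
  exact Measure.integrableOn_of_bounded measure_Ioc_lt_top.ne hg.aestronglyMeasurable
    (ae_of_all _ fun θ ↦ hB _ (circleMap_mem_sphere' c R θ))

lemma tendsto_poissonIntegral_of_tendsto {v : ℕ → ℂ → ℝ} {V : ℂ → ℝ} {c w : ℂ} {R B : ℝ}
    (hv : ∀ n, ContinuousOn (v n) (sphere c |R|)) (hB : ∀ n, ∀ z ∈ sphere c |R|, ‖v n z‖ ≤ B)
    (hlim : ∀ z ∈ sphere c |R|, Tendsto (v · z) atTop (𝓝 (V z))) (hw : w ∈ ball c R) :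
    Tendsto (fun n ↦ poissonIntegral (v n) c R w) atTop (𝓝 (poissonIntegral V c R w)) := by
  have h_mem := circleMap_mem_sphere' c R
  have h_kernel : Continuous fun θ ↦ poissonKernel c w (circleMap c R θ) :=
    (continuousOn_poissonKernel hw).comp_continuous (continuous_circleMap c R) h_mem
  refine Tendsto.const_smul (intervalIntegral.tendsto_integral_filter_of_dominated_convergence
    (fun θ ↦ |poissonKernel c w (circleMap c R θ)| * B) (Eventually.of_forall fun n ↦ ?_)
    (Eventually.of_forall fun n ↦ ae_of_all _ fun θ _ ↦ ?_)
    ((h_kernel.abs.mul continuous_const).intervalIntegrable _ _)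
    (ae_of_all _ fun θ _ ↦ (hlim _ (h_mem θ)).const_mul _)) _
  · exact (h_kernel.mul
      ((hv n).comp_continuous (continuous_circleMap c R) h_mem)).aestronglyMeasurable
  · rw [norm_mul, Real.norm_eq_abs]
    exact mul_le_mul_of_nonneg_left (hB n _ (h_mem θ)) (abs_nonneg _)

lemma exists_seq_ball_cover {s : Set ℂ} (hs : IsOpen s) (hne : s.Nonempty) :
    ∃ (c : ℕ → ℂ) (r : ℕ → ℝ), (∀ n, 0 < r n) ∧ (∀ n, closedBall (c n) (r n) ⊆ s) ∧
      ∀ z ∈ s, ∃ n, z ∈ ball (c n) (r n) := by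
  have h_ball : ∀ z : s, ∃ r > 0, closedBall (z : ℂ) r ⊆ s := fun z ↦
    nhds_basis_closedBall.mem_iff.1 (hs.mem_nhds z.2)
  choose r hr hrs using h_ball
  obtain ⟨t, ht, h_cover⟩ := TopologicalSpace.countable_cover_nhds
    (f := fun z : s ↦ Subtype.val ⁻¹' ball (z : ℂ) (r z))
    fun z ↦ (isOpen_ball.preimage continuous_subtype_val).mem_nhds (mem_ball_self (hr z))
  have h_mem (z : s) : ∃ x ∈ t, (z : ℂ) ∈ ball (x : ℂ) (r x) := by
    simpa only [mem_iUnion₂, mem_preimage, exists_prop] using h_cover.symm.subset (mem_univ z)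
  obtain ⟨z₀, hz₀⟩ := hne
  obtain ⟨x₀, hx₀, -⟩ := h_mem ⟨z₀, hz₀⟩
  obtain ⟨φ, rfl⟩ := ht.exists_eq_range ⟨x₀, hx₀⟩
  refine ⟨fun n ↦ φ n, fun n ↦ r (φ n), fun n ↦ hr _, fun n ↦ hrs _, fun z hz ↦ ?_⟩
  obtain ⟨-, ⟨n, rfl⟩, hn⟩ := h_mem ⟨z, hz⟩
  exact ⟨n, hn⟩

/-- Successive Poisson modifications of `u` on the discs `ball (c i) (r i)`. The `n`-th step uses
the disc with index `n.unpair.2`, so that each disc recurs infinitely often. -/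
noncomputable def balayageSeq (u : ℂ → ℝ) (c : ℕ → ℂ) (r : ℕ → ℝ) : ℕ → ℂ → ℝ
  | 0 => u
  | n + 1 => poissonModification (balayageSeq u c r n) (c n.unpair.2) (r n.unpair.2)

section Balayage

variable {D : Set ℂ} {u : ℂ → ℝ} {F : Set (ℂ → ℝ)} {c : ℕ → ℂ} {r : ℕ → ℝ}

lemma balayageSeq_mem (huF : u ∈ F)
    (hmod : ∀ v ∈ F, ∀ c R, 0 < R → closedBall c R ⊆ D → poissonModification v c R ∈ F)
    (hr : ∀ n, 0 < r n) (hD : ∀ n, closedBall (c n) (r n) ⊆ D) (n : ℕ) :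
    balayageSeq u c r n ∈ F := by
  induction n with
  | zero => exact huF
  | succ n ih => exact hmod _ ih _ _ (hr _) (hD _)

lemma monotone_balayageSeq (hv : ∀ n, ContSubharmonicOn (balayageSeq u c r n) D)
    (hD : ∀ n, closedBall (c n) (r n) ⊆ D) : Monotone (balayageSeq u c r) :=
  monotone_nat_of_le_succ fun n z ↦ (hv n).le_poissonModification (hD _) z

/-- The limit `V` of the balayage sequence equals its own Poisson integral on every disc: pass to
the limit along the steps that treat this disc. -/
lemma harmonicOnNhd_of_tendsto_balayageSeq {V : ℂ → ℝ} {i : ℕ} {B : ℝ} (hr : 0 < r i)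
    (hcont : ∀ n, ContinuousOn (balayageSeq u c r n) (closedBall (c i) (r i)))
    (hB : ∀ n, ∀ z ∈ closedBall (c i) (r i), ‖balayageSeq u c r n z‖ ≤ B)
    (hlim : ∀ z ∈ closedBall (c i) (r i), Tendsto (balayageSeq u c r · z) atTop (𝓝 (V z))) :
    HarmonicOnNhd V (ball (c i) (r i)) := by
  have h_sphere : sphere (c i) |r i| ⊆ closedBall (c i) (r i) := by
    rw [abs_of_pos hr]; exact sphere_subset_closedBall
  have h_mem (θ : ℝ) : circleMap (c i) (r i) θ ∈ closedBall (c i) (r i) :=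
    circleMap_mem_closedBall _ hr.le θ
  have h_steps : Tendsto (fun k ↦ Nat.pair k i) atTop atTop :=
    tendsto_atTop_mono (fun k ↦ Nat.left_le_pair k i) tendsto_id
  have h_meas : Measurable fun θ ↦ V (circleMap (c i) (r i) θ) :=
    measurable_of_tendsto_metrizable
      (fun n ↦ ((hcont n).comp_continuous (continuous_circleMap _ _) h_mem).measurable)
      (tendsto_pi_nhds.2 fun θ ↦ hlim _ (h_mem θ))
  have h_int : CircleIntegrable V (c i) (r i) := circleIntegrable_of_norm_le h_meas fun z hz ↦
    le_of_tendsto (hlim z (h_sphere hz)).norm (Eventually.of_forall fun n ↦ hB n z (h_sphere hz))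
  refine harmonicOnNhd_congr isOpen_ball (harmonicOnNhd_poissonIntegral h_int) fun w hw ↦ ?_
  refine tendsto_nhds_unique ((tendsto_poissonIntegral_of_tendsto (fun n ↦ (hcont n).mono h_sphere)
    (fun n z hz ↦ hB n z (h_sphere hz)) (fun z hz ↦ hlim z (h_sphere hz)) hw).comp h_steps)
    (((hlim w (ball_subset_closedBall hw)).comp
      ((tendsto_add_atTop_nat 1).comp h_steps)).congr fun k ↦ ?_)
  simp [balayageSeq, poissonModification_of_mem hw]

lemma exists_harmonicOnNhd_ge (hD : IsOpen D) (huF : u ∈ F)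
    (hF : ∀ v ∈ F, ContSubharmonicOn v D)
    (hmod : ∀ v ∈ F, ∀ c R, 0 < R → closedBall c R ⊆ D → poissonModification v c R ∈ F)
    (hbdd : ∀ K ⊆ D, IsCompact K → ∃ M, ∀ v ∈ F, ∀ z ∈ K, v z ≤ M) :
    ∃ V : ℂ → ℝ, HarmonicOnNhd V D ∧ ∀ z ∈ D, u z ≤ V z := by
  rcases D.eq_empty_or_nonempty with rfl | hne
  · exact ⟨u, fun z hz ↦ hz.elim, fun z hz ↦ hz.elim⟩
  obtain ⟨c, r, hr, hcr, h_cover⟩ := exists_seq_ball_cover hD hne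
  set v := balayageSeq u c r
  have hvF (n : ℕ) : v n ∈ F := balayageSeq_mem huF hmod hr hcr n
  have hv_mono : Monotone v := monotone_balayageSeq (fun n ↦ hF _ (hvF n)) hcr
  have hv_bdd : ∀ z ∈ D, BddAbove (range (v · z)) := fun z hz ↦ by
    obtain ⟨M, hM⟩ := hbdd {z} (singleton_subset_iff.2 hz) isCompact_singleton
    exact ⟨M, forall_mem_range.2 fun n ↦ hM _ (hvF n) z rfl⟩
  have hlim : ∀ z ∈ D, Tendsto (v · z) atTop (𝓝 (⨆ n, v n z)) := fun z hz ↦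
    tendsto_atTop_ciSup (fun m n hmn ↦ hv_mono hmn z) (hv_bdd z hz)
  refine ⟨fun z ↦ ⨆ n, v n z, fun z hz ↦ ?_, fun z hz ↦ le_ciSup (hv_bdd z hz) 0⟩
  obtain ⟨i, hi⟩ := h_cover z hz
  obtain ⟨M, hM⟩ := hbdd _ (hcr i) (isCompact_closedBall _ _)
  obtain ⟨M₀, hM₀⟩ := (isCompact_closedBall (c i) (r i)).exists_bound_of_continuousOn
    ((hF _ huF).continuousOn.mono (hcr i))
  refine harmonicOnNhd_of_tendsto_balayageSeq (B := max M M₀) (hr i)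
    (fun n ↦ (hF _ (hvF n)).continuousOn.mono (hcr i)) (fun n w hw ↦ ?_)
    (fun w hw ↦ hlim w (hcr i hw)) z hi
  have h_lower : u w ≤ v n w := hv_mono (Nat.zero_le n) w
  rw [Real.norm_eq_abs, abs_le]
  constructor
  · linarith [(abs_le.1 (hM₀ w hw)).1, le_max_right M M₀]
  · exact (hM _ (hvF n) w hw).trans (le_max_left _ _)

end Balayage

/-! ### Circle averages as self-adjoint operators -/

section CircleAverage

variable {V P : ℂ → ℝ} {B : ℝ} {μ : Measure ℂ}

lemma measurable_circleMap_prod (r : ℝ) : Measurable fun p : ℂ × ℝ ↦ circleMap p.1 r p.2 := by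
  unfold circleMap
  fun_prop

lemma integrable_mul_comp_circleMap (hV : Integrable V μ) (hP : Measurable P)
    (hB : ∀ z, ‖P z‖ ≤ B) (r : ℝ) :
    Integrable (fun p : ℂ × ℝ ↦ V p.1 * P (circleMap p.1 r p.2))
      (μ.prod (volume.restrict (Ioc 0 (2 * Real.pi)))) :=
  (hV.comp_fst _).mul_bdd (c := B) (hP.comp (measurable_circleMap_prod r)).aestronglyMeasurable
    (ae_of_all _ fun _ ↦ hB _)

lemma mul_circleAverage_eq_integral (a : ℝ) (f : ℂ → ℝ) (z : ℂ) (r : ℝ) :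
    a * circleAverage f z r =
      (2 * Real.pi)⁻¹ * ∫ θ in Ioc 0 (2 * Real.pi), a * f (circleMap z r θ) := by
  rw [circleAverage, intervalIntegral.integral_of_le (by positivity), integral_const_mul,
    smul_eq_mul, mul_left_comm]

lemma integrable_mul_circleAverage [SFinite μ] (hV : Integrable V μ) (hP : Measurable P)
    (hB : ∀ z, ‖P z‖ ≤ B) (r : ℝ) : Integrable (fun z ↦ V z * circleAverage P z r) μ := by
  simp only [mul_circleAverage_eq_integral]
  exact (integrable_mul_comp_circleMap hV hP hB r).integral_prod_left.const_mul _

lemma integral_mul_circleAverage_comm {B' : ℝ} (hV : Integrable V) (hVm : Measurable V)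
    (hVB : ∀ z, ‖V z‖ ≤ B) (hP : Integrable P) (hPm : Measurable P) (hPB : ∀ z, ‖P z‖ ≤ B')
    (r : ℝ) : ∫ z, V z * circleAverage P z r = ∫ z, P z * circleAverage V z r := by
  have h_translate (θ : ℝ) :
      ∫ z, V z * P (circleMap z r θ) = ∫ z, P z * V (circleMap z (-r) θ) := by
    rw [← integral_add_right_eq_self (fun z ↦ P z * V (circleMap z (-r) θ)) (circleMap 0 r θ)]
    refine integral_congr_ae (ae_of_all _ fun z ↦ ?_)
    simp [circleMap, mul_comm]
  calc ∫ z, V z * circleAverage P z r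
      = (2 * Real.pi)⁻¹ * ∫ θ in Ioc 0 (2 * Real.pi), ∫ z, V z * P (circleMap z r θ) := by
        simp only [mul_circleAverage_eq_integral]
        rw [integral_const_mul, integral_integral_swap (integrable_mul_comp_circleMap hV hPm hPB r)]
    _ = (2 * Real.pi)⁻¹ * ∫ θ in Ioc 0 (2 * Real.pi), ∫ z, P z * V (circleMap z (-r) θ) := by
        simp only [h_translate]
    _ = ∫ z, P z * circleAverage V z (-r) := by
        simp only [mul_circleAverage_eq_integral]
        rw [integral_const_mul,
          ← integral_integral_swap (integrable_mul_comp_circleMap hP hVm hVB (-r))]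
    _ = ∫ z, P z * circleAverage V z r := by simp only [Real.circleAverage_neg_radius]

end CircleAverage

lemma measurable_indicator_of_continuousOn {v : ℂ → ℝ} {s : Set ℂ} (hv : ContinuousOn v s)
    (hs : MeasurableSet s) : Measurable (s.indicator v) := by
  classical
  rw [← piecewise_eq_indicator]
  exact hv.measurable_piecewise continuousOn_const hs

lemma exists_norm_indicator_le_of_continuousOn {v : ℂ → ℝ} {K : Set ℂ} (hK : IsCompact K)
    (hv : ContinuousOn v K) : ∃ M, ∀ z, ‖K.indicator v z‖ ≤ M := by
  obtain ⟨M, hM⟩ := hK.exists_bound_of_continuousOn hv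
  refine ⟨|M|, fun z ↦ ?_⟩
  by_cases hz : z ∈ K
  · simpa only [indicator_of_mem hz] using (hM z hz).trans (le_abs_self M)
  · simp [indicator_of_notMem hz]

/-- If `v` is subharmonic on the `r`-neighbourhood of the support of `φ ≥ 0`, then moving the
averaging operator from `φ` to `v` exhibits the integral as `∫ φ (circleAverage v - v) ≥ 0`. -/
lemma ContSubharmonicOn.setIntegral_mul_circleAverage_sub_nonneg {v φ : ℂ → ℝ} {D K : Set ℂ}
    {r B : ℝ} (hv : ContSubharmonicOn v D) (hr : 0 < r) (hK : IsCompact K)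
    (hKD : cthickening r K ⊆ D) (hφ : Measurable φ) (hφ_nonneg : ∀ z, 0 ≤ φ z)
    (hφB : ∀ z, ‖φ z‖ ≤ B) (hφK : ∀ z ∉ K, φ z = 0) :
    0 ≤ ∫ z in cthickening r K, v z * (circleAverage φ z r - φ z) := by
  set K' := cthickening r K
  have hK' : IsCompact K' := hK.cthickening
  have hK'_meas : MeasurableSet K' := hK'.isClosed.measurableSet
  have hv_cont : ContinuousOn v K' := hv.continuousOn.mono hKD
  set V : ℂ → ℝ := K'.indicator v
  have hV_int : Integrable V := (hv_cont.integrableOn_compact hK').integrable_indicator hK'_meas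
  have hV_meas : Measurable V := measurable_indicator_of_continuousOn hv_cont hK'_meas
  obtain ⟨M, hVM⟩ := exists_norm_indicator_le_of_continuousOn hK' hv_cont
  have hφ_int : Integrable φ := by
    rw [← integrableOn_iff_integrable_of_support_subset (s := K)
      (Function.support_subset_iff'.2 hφK)]
    exact Measure.integrableOn_of_bounded hK.measure_lt_top.ne hφ.aestronglyMeasurable
      (ae_of_all _ hφB)
  have h_pointwise (z : ℂ) : 0 ≤ φ z * circleAverage V z r - φ z * V z := by
    by_cases hz : z ∈ K
    · have h_ball : closedBall z r ⊆ K' := closedBall_subset_cthickening hz r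
      have h_avg : circleAverage V z r = circleAverage v z r :=
        Real.circleAverage_congr_sphere fun w hw ↦ indicator_of_mem
          (h_ball (sphere_subset_closedBall (abs_of_pos hr ▸ hw))) v
      have h_center : V z = v z := indicator_of_mem (h_ball (mem_closedBall_self hr.le)) v
      rw [h_avg, h_center, ← mul_sub]
      refine mul_nonneg (hφ_nonneg z) (sub_nonneg.2 ?_)
      exact hv.le_circleAverage hr (h_ball.trans hKD)
    · simp [hφK z hz]
  calc 0 ≤ ∫ z, (φ z * circleAverage V z r - φ z * V z) := integral_nonneg h_pointwise
    _ = ∫ z, (V z * circleAverage φ z r - V z * φ z) := by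
        rw [integral_sub (integrable_mul_circleAverage hφ_int hV_meas hVM r)
            (hφ_int.mul_bdd (c := M) hV_meas.aestronglyMeasurable (ae_of_all _ hVM)),
          integral_sub (integrable_mul_circleAverage hV_int hφ hφB r)
            (hV_int.mul_bdd (c := B) hφ.aestronglyMeasurable (ae_of_all _ hφB)),
          integral_mul_circleAverage_comm hV_int hV_meas hVM hφ_int hφ hφB]
        simp only [mul_comm (φ _)]
    _ = ∫ z in K', v z * (circleAverage φ z r - φ z) := by
        rw [← integral_indicator hK'_meas]
        simp only [V, ← mul_sub, indicator_mul_left]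

lemma ContSubharmonicOn.setIntegral_mul_nonneg_of_circleAverage_sub_le {v φ h : ℂ → ℝ}
    {D K : Set ℂ} {r B : ℝ} (hv : ContSubharmonicOn v D) (hv_nonneg : ∀ z ∈ D, 0 ≤ v z)
    (hr : 0 < r) (hK : IsCompact K) (hKD : cthickening r K ⊆ D) (hφ : Measurable φ)
    (hφ_nonneg : ∀ z, 0 ≤ φ z) (hφB : ∀ z, ‖φ z‖ ≤ B) (hφK : ∀ z ∉ K, φ z = 0)
    (hh : IntegrableOn (fun z ↦ v z * h z) (cthickening r K))
    (h_le : ∀ z ∈ cthickening r K, circleAverage φ z r - φ z ≤ h z) :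
    0 ≤ ∫ z in cthickening r K, v z * h z := by
  have hv_int : IntegrableOn v (cthickening r K) :=
    (hv.continuousOn.mono hKD).integrableOn_compact hK.cthickening
  have h_int : IntegrableOn (fun z ↦ v z * (circleAverage φ z r - φ z)) (cthickening r K) := by
    simp only [mul_sub]
    exact (integrable_mul_circleAverage hv_int hφ hφB r).sub
      (hv_int.mul_bdd (c := B) hφ.aestronglyMeasurable (ae_of_all _ hφB))
  exact (hv.setIntegral_mul_circleAverage_sub_nonneg hr hK hKD hφ hφ_nonneg hφB hφK).trans
    (setIntegral_mono_on h_int hh hK.cthickening.measurableSet fun z hz ↦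
      mul_le_mul_of_nonneg_left (h_le z hz) (hv_nonneg z (hKD hz)))

lemma ContSubharmonicOn.mul_setIntegral_inter_le_mul_setIntegral_inter {v φ : ℂ → ℝ}
    {D K E N : Set ℂ} {r B a c : ℝ} (hv : ContSubharmonicOn v D) (hv_nonneg : ∀ z ∈ D, 0 ≤ v z)
    (hr : 0 < r) (hK : IsCompact K) (hKD : cthickening r K ⊆ D) (hφ : Measurable φ)
    (hφ_nonneg : ∀ z, 0 ≤ φ z) (hφB : ∀ z, ‖φ z‖ ≤ B) (hφK : ∀ z ∉ K, φ z = 0)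
    (hE : MeasurableSet E) (hN : MeasurableSet N)
    (h_le : ∀ z ∈ cthickening r K,
      circleAverage φ z r - φ z ≤ a * N.indicator 1 z - c * E.indicator 1 z) :
    c * ∫ z in cthickening r K ∩ E, v z ≤ a * ∫ z in cthickening r K ∩ N, v z := by
  have hv_int : IntegrableOn v (cthickening r K) :=
    (hv.continuousOn.mono hKD).integrableOn_compact hK.cthickening
  have hN_int : IntegrableOn (fun z ↦ a * N.indicator v z) (cthickening r K) :=
    (hv_int.indicator hN).const_mul _
  have hE_int : IntegrableOn (fun z ↦ c * E.indicator v z) (cthickening r K) :=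
    (hv_int.indicator hE).const_mul _
  have h_mul (z : ℂ) : v z * (a * N.indicator 1 z - c * E.indicator 1 z) =
      a * N.indicator v z - c * E.indicator v z := by
    have h_ind (s : Set ℂ) : s.indicator v z = v z * s.indicator 1 z := by
      by_cases hz : z ∈ s <;> simp [hz]
    rw [h_ind N, h_ind E]
    ring
  have h_nonneg := hv.setIntegral_mul_nonneg_of_circleAverage_sub_le hv_nonneg hr hK hKD hφ
    hφ_nonneg hφB hφK (by simp only [h_mul]; exact hN_int.sub hE_int) h_le
  simp only [h_mul] at h_nonneg
  rwa [integral_sub hN_int hE_int, integral_const_mul, integral_const_mul,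
    setIntegral_indicator hN, setIntegral_indicator hE, sub_nonneg] at h_nonneg

/-! ### A convex-concave cutoff -/

section LevelCutoff

variable {ε s t : ℝ}

/-- The `C¹` cutoff that vanishes on `[-ε, ∞)`, is affine of slope `-1` on `(-∞, -2ε]`, and is
quadratic with second derivative `ε⁻¹` in between; it is written as a difference of two squared
positive parts. -/
noncomputable def levelCutoff (ε t : ℝ) : ℝ :=
  (max (-ε - t) 0 ^ 2 - max (-2 * ε - t) 0 ^ 2) / (2 * ε)

lemma continuous_levelCutoff (ε : ℝ) : Continuous (levelCutoff ε) := by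
  unfold levelCutoff
  fun_prop

lemma levelCutoff_nonneg (hε : 0 < ε) (t : ℝ) : 0 ≤ levelCutoff ε t := by
  have h_le : max (-2 * ε - t) 0 ≤ max (-ε - t) 0 := max_le_max_right _ (by linarith)
  exact div_nonneg (sub_nonneg.2 (pow_le_pow_left₀ (le_max_right _ _) h_le 2)) (by positivity)

lemma levelCutoff_eq_zero (hε : 0 < ε) (ht : -ε ≤ t) : levelCutoff ε t = 0 := by
  rw [levelCutoff, max_eq_right (by linarith), max_eq_right (by linarith), sub_self, zero_div]

lemma levelCutoff_eq_affine (hε : 0 < ε) (ht : t ≤ -2 * ε) :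
    levelCutoff ε t = -t - 3 / 2 * ε := by
  rw [levelCutoff, max_eq_left (by linarith), max_eq_left (by linarith)]
  field_simp
  ring

/-- The second derivative of the cutoff is at most `ε⁻¹`. -/
lemma exists_levelCutoff_le (hε : 0 < ε) (t : ℝ) :
    ∃ d ≤ 0, ∀ s, levelCutoff ε s ≤ levelCutoff ε t + d * (s - t) + (s - t) ^ 2 / (2 * ε) := by
  set x := max (-ε - t) 0 with hx
  set y := max (-2 * ε - t) 0 with hy
  have hyx : y ≤ x := max_le_max_right _ (by linarith)
  refine ⟨(y - x) / ε, div_nonpos_of_nonpos_of_nonneg (by linarith) hε.le, fun s ↦ ?_⟩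
  have h_upper : max (-ε - s) 0 ^ 2 ≤ x ^ 2 + 2 * x * (t - s) + (s - t) ^ 2 := by
    rcases max_cases (-ε - s) 0 with h | h <;> rcases max_cases (-ε - t) 0 with h' | h' <;>
      rw [h.1, hx, h'.1] <;> nlinarith
  have h_lower : y ^ 2 + 2 * y * (t - s) ≤ max (-2 * ε - s) 0 ^ 2 := by
    rcases max_cases (-2 * ε - s) 0 with h | h <;> rcases max_cases (-2 * ε - t) 0 with h' | h' <;>
      rw [h.1, hy, h'.1] <;> nlinarith
  have h_eq : levelCutoff ε t + (y - x) / ε * (s - t) + (s - t) ^ 2 / (2 * ε) =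
      (x ^ 2 + 2 * x * (t - s) + (s - t) ^ 2 - (y ^ 2 + 2 * y * (t - s))) / (2 * ε) := by
    rw [levelCutoff, ← hx, ← hy]
    field_simp
    ring
  rw [h_eq, levelCutoff]
  gcongr

end LevelCutoff

/-! ### Comparison of interior and boundary integrals -/

/-- `ρ` is a bounded subharmonic exhaustion of `D`, in the sense of circle averages, that is
uniformly strictly subharmonic on `E ⊆ {ρ ≤ -μ}` and uniformly Lipschitz on the collar
`{-μ < ρ}` of the boundary. The scale `κ` bounds the radii for which the last two hold. -/
structure IsAdaptedExhaustion (D E : Set ℂ) (ρ : ℂ → ℝ) (c κ L μ : ℝ) : Prop where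
  measurable : Measurable ρ
  bounded : ∃ B, ∀ z ∈ D, |ρ z| ≤ B
  le_circleAverage : ∀ z ∈ D, ∀ r, 0 < r → closedBall z r ⊆ D → ρ z ≤ circleAverage ρ z r
  add_le_circleAverage : ∀ z ∈ E, ∀ r, 0 < r → r < κ → ρ z + c * r ^ 2 ≤ circleAverage ρ z r
  abs_sub_le : ∀ z ∈ D, -μ < ρ z → ∀ w ∈ D, dist w z < κ → |ρ w - ρ z| ≤ L * dist w z
  exhaustion : ∀ ε > 0, ∃ K ⊆ D, IsCompact K ∧ ∀ z ∈ D \ K, -ε < ρ z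
  le_neg : ∀ z ∈ E, ρ z ≤ -μ

lemma circleAverage_le_of_le_affine {φ ρ : ℂ → ℝ} {z : ℂ} {r a d : ℝ}
    (hφ : CircleIntegrable φ z r) (hρ : CircleIntegrable ρ z r)
    (h : ∀ w ∈ sphere z |r|, φ w ≤ a + d * ρ w) :
    circleAverage φ z r ≤ a + d * circleAverage ρ z r := by
  have hdρ : CircleIntegrable (d • ρ) z r := hρ.const_smul
  calc circleAverage φ z r ≤ circleAverage ((fun _ ↦ a) + d • ρ) z r :=
        Real.circleAverage_mono hφ ((circleIntegrable_const a z r).add hdρ) h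
    _ = a + d * circleAverage ρ z r := by
        rw [Real.circleAverage_add (circleIntegrable_const a z r) hdρ,
          Real.circleAverage_const, Real.circleAverage_smul, smul_eq_mul]

namespace IsAdaptedExhaustion

variable {D E : Set ℂ} {ρ : ℂ → ℝ} {c κ L μ ε δ : ℝ} {z : ℂ}

lemma circleIntegrable (h : IsAdaptedExhaustion D E ρ c κ L μ) (hδ : 0 < δ)
    (hz : closedBall z δ ⊆ D) : CircleIntegrable ρ z δ := by
  obtain ⟨B, hB⟩ := h.bounded
  refine circleIntegrable_of_norm_le (h.measurable.comp (by fun_prop)) fun w hw ↦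
    hB w (hz (sphere_subset_closedBall ?_))
  rwa [abs_of_pos hδ] at hw

lemma measurable_indicator_levelCutoff (h : IsAdaptedExhaustion D E ρ c κ L μ) (hD : IsOpen D) :
    Measurable (D.indicator (levelCutoff ε ∘ ρ)) :=
  ((continuous_levelCutoff ε).measurable.comp h.measurable).indicator hD.measurableSet

lemma exists_norm_indicator_levelCutoff_le (h : IsAdaptedExhaustion D E ρ c κ L μ) (ε : ℝ) :
    ∃ B, ∀ z, ‖D.indicator (levelCutoff ε ∘ ρ) z‖ ≤ B := by
  obtain ⟨B, hB⟩ := h.bounded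
  obtain ⟨M, hM⟩ := (isCompact_Icc (a := -B) (b := B)).exists_bound_of_continuousOn
    (continuous_levelCutoff ε).continuousOn
  refine ⟨|M|, fun z ↦ ?_⟩
  by_cases hz : z ∈ D
  · rw [indicator_of_mem hz]
    exact (hM _ (abs_le.1 (hB z hz))).trans (le_abs_self M)
  · simp [indicator_of_notMem hz]

lemma circleAverage_levelCutoff_le_of_le_affine (h : IsAdaptedExhaustion D E ρ c κ L μ)
    (hD : IsOpen D) (hδ : 0 < δ) (hz : closedBall z δ ⊆ D) {a d : ℝ}
    (had : ∀ w ∈ sphere z δ, levelCutoff ε (ρ w) ≤ a + d * ρ w) :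
    circleAverage (D.indicator (levelCutoff ε ∘ ρ)) z δ ≤ a + d * circleAverage ρ z δ := by
  obtain ⟨B, hB⟩ := h.exists_norm_indicator_levelCutoff_le ε
  have h_int : CircleIntegrable (D.indicator (levelCutoff ε ∘ ρ)) z δ :=
    circleIntegrable_of_norm_le ((h.measurable_indicator_levelCutoff hD).comp (by fun_prop))
      fun w _ ↦ hB w
  refine circleAverage_le_of_le_affine h_int (h.circleIntegrable hδ hz) fun w hw ↦ ?_
  rw [abs_of_pos hδ] at hw
  rw [indicator_of_mem (hz (sphere_subset_closedBall hw))]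
  exact had w hw

lemma circleAverage_levelCutoff_sub_le_near (h : IsAdaptedExhaustion D E ρ c κ L μ)
    (hD : IsOpen D) (hε : 0 < ε) (hεμ : 3 * ε < μ) (hδ : 0 < δ) (hδκ : δ < κ)
    (hz : closedBall z δ ⊆ D) (hρz : -3 * ε ≤ ρ z) :
    circleAverage (D.indicator (levelCutoff ε ∘ ρ)) z δ - levelCutoff ε (ρ z) ≤
      δ ^ 2 * (L ^ 2 / (2 * ε)) := by
  have hzD : z ∈ D := hz (mem_closedBall_self hδ.le)
  obtain ⟨d, hd, h_cutoff⟩ := exists_levelCutoff_le hε (ρ z)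
  have h_avg := h.circleAverage_levelCutoff_le_of_le_affine hD hδ hz (ε := ε)
    (a := levelCutoff ε (ρ z) - d * ρ z + δ ^ 2 * (L ^ 2 / (2 * ε))) (d := d) fun w hw ↦ by
      have h_lip : |ρ w - ρ z| ≤ L * δ := by
        have hw' : dist w z = δ := hw
        simpa only [hw'] using
          h.abs_sub_le z hzD (by linarith) w (hz (sphere_subset_closedBall hw)) (hw' ▸ hδκ)
      have h_sq : (ρ w - ρ z) ^ 2 / (2 * ε) ≤ δ ^ 2 * (L ^ 2 / (2 * ε)) := by
        rw [← mul_div_assoc, ← mul_pow, mul_comm δ]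
        gcongr ?_ / _
        exact sq_le_sq.2 (h_lip.trans (le_abs_self _))
      linarith [h_cutoff (ρ w)]
  have h_sub : d * circleAverage ρ z δ ≤ d * ρ z :=
    mul_le_mul_of_nonpos_left (h.le_circleAverage z hzD δ hδ hz) hd
  linarith

lemma circleAverage_levelCutoff_sub_le_far (h : IsAdaptedExhaustion D E ρ c κ L μ)
    (hD : IsOpen D) (hε : 0 < ε) (hεμ : 3 * ε < μ) (hδ : 0 < δ) (hδκ : δ < κ)
    (hLδ : L * δ < ε) (hz : closedBall z δ ⊆ D) (hρz : ρ z < -3 * ε) :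
    circleAverage (D.indicator (levelCutoff ε ∘ ρ)) z δ - levelCutoff ε (ρ z) ≤
      ρ z - circleAverage ρ z δ := by
  have hzD : z ∈ D := hz (mem_closedBall_self hδ.le)
  have h_sphere (w : ℂ) (hw : w ∈ sphere z δ) : ρ w ≤ -2 * ε := by
    by_contra! hρw
    have h_lip : |ρ z - ρ w| ≤ L * δ := by
      have hw' : dist z w = δ := mem_sphere'.1 hw
      simpa only [hw'] using
        h.abs_sub_le w (hz (sphere_subset_closedBall hw)) (by linarith) z hzD (hw' ▸ hδκ)
    linarith [(abs_le.1 h_lip).1]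
  have h_avg := h.circleAverage_levelCutoff_le_of_le_affine hD hδ hz (ε := ε)
    (a := -(3 / 2) * ε) (d := -1) fun w hw ↦ by
      rw [levelCutoff_eq_affine hε (h_sphere w hw)]
      linarith
  rw [levelCutoff_eq_affine hε (by linarith)]
  linarith

lemma circleAverage_levelCutoff_sub_le (h : IsAdaptedExhaustion D E ρ c κ L μ)
    (hD : IsOpen D) (hε : 0 < ε) (hεμ : 3 * ε < μ) (hδ : 0 < δ) (hδκ : δ < κ)
    (hLδ : L * δ < ε) (hz : closedBall z δ ⊆ D) :
    circleAverage (D.indicator (levelCutoff ε ∘ ρ)) z δ - levelCutoff ε (ρ z) ≤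
      δ ^ 2 * (L ^ 2 / (2 * ε) * {w | -3 * ε ≤ ρ w}.indicator 1 z - c * E.indicator 1 z) := by
  by_cases hρz : -3 * ε ≤ ρ z
  · have hzE : z ∉ E := fun hzE ↦ by linarith [h.le_neg z hzE]
    rw [indicator_of_mem (s := {w | -3 * ε ≤ ρ w}) hρz, indicator_of_notMem hzE]
    simpa using h.circleAverage_levelCutoff_sub_le_near hD hε hεμ hδ hδκ hz hρz
  · rw [indicator_of_notMem (s := {w | -3 * ε ≤ ρ w}) hρz]
    refine (h.circleAverage_levelCutoff_sub_le_far hD hε hεμ hδ hδκ hLδ hz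
      (not_le.1 hρz)).trans ?_
    by_cases hzE : z ∈ E
    · rw [indicator_of_mem hzE, Pi.one_apply]
      linarith [h.add_le_circleAverage z hzE δ hδ hδκ]
    · rw [indicator_of_notMem hzE]
      linarith [h.le_circleAverage z (hz (mem_closedBall_self hδ.le)) δ hδ hz]

/-- Integrating the subharmonicity of `v` against the averages of the cutoff bounds `∫_E v` by the
mass of `v` in a collar of the boundary. -/
lemma mul_setIntegral_le (h : IsAdaptedExhaustion D E ρ c κ L μ) {v : ℂ → ℝ}
    (hD : IsOpen D) (hE : MeasurableSet E) (hv : ContSubharmonicOn v D)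
    (hv_nonneg : ∀ z ∈ D, 0 ≤ v z) (hε : 0 < ε) (hεμ : 3 * ε < μ) (hδ : 0 < δ) (hδκ : δ < κ)
    (hLδ : L * δ < ε) {K : Set ℂ} (hK : IsCompact K) (hKD : cthickening (δ + δ) K ⊆ D)
    (hEK : E ⊆ K) (hKρ : ∀ z ∈ D \ K, -ε < ρ z) :
    c * ∫ z in E, v z ≤
      L ^ 2 / (2 * ε) * ∫ z in cthickening δ K ∩ {w | -3 * ε ≤ ρ w}, v z := by
  have hK_ball : ∀ z ∈ cthickening δ K, closedBall z δ ⊆ D := fun z hz ↦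
    ((closedBall_subset_cthickening hz δ).trans
      (cthickening_cthickening_subset hδ.le hδ.le K)).trans hKD
  have hK_sub : cthickening δ K ⊆ D := fun z hz ↦ hK_ball z hz (mem_closedBall_self hδ.le)
  obtain ⟨B, hB⟩ := h.exists_norm_indicator_levelCutoff_le ε
  have hφ_nonneg (z : ℂ) : 0 ≤ D.indicator (levelCutoff ε ∘ ρ) z :=
    indicator_nonneg (fun w _ ↦ levelCutoff_nonneg hε (ρ w)) z
  have hφK (z : ℂ) (hz : z ∉ K) : D.indicator (levelCutoff ε ∘ ρ) z = 0 :=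
    indicator_apply_eq_zero.2 fun hzD ↦ levelCutoff_eq_zero hε (hKρ z ⟨hzD, hz⟩).le
  have h_le := hv.mul_setIntegral_inter_le_mul_setIntegral_inter hv_nonneg hδ hK hK_sub
    (h.measurable_indicator_levelCutoff hD) hφ_nonneg hB hφK hE
    (measurableSet_le measurable_const h.measurable)
    (a := δ ^ 2 * (L ^ 2 / (2 * ε))) (c := δ ^ 2 * c) fun z hz ↦ by
      rw [indicator_of_mem (hK_sub hz), mul_assoc, mul_assoc, ← mul_sub]
      exact h.circleAverage_levelCutoff_sub_le hD hε hεμ hδ hδκ hLδ (hK_ball z hz)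
  rw [inter_eq_right.2 (hEK.trans (self_subset_cthickening K)), mul_assoc, mul_assoc] at h_le
  exact le_of_mul_le_mul_left h_le (by positivity)

lemma exists_mul_setIntegral_le (h : IsAdaptedExhaustion D E ρ c κ L μ) {v : ℂ → ℝ}
    (hD : IsOpen D) (hE : IsCompact E) (hED : E ⊆ D) (hκ : 0 < κ) (hv : ContSubharmonicOn v D)
    (hv_nonneg : ∀ z ∈ D, 0 ≤ v z) (hε : 0 < ε) (hεμ : 3 * ε < μ) :
    ∃ K ⊆ D, IsCompact K ∧
      c * ∫ z in E, v z ≤ L ^ 2 / (2 * ε) * ∫ z in K ∩ {w | -3 * ε ≤ ρ w}, v z := by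
  obtain ⟨K, hKD, hK, hKρ⟩ := h.exhaustion ε hε
  obtain ⟨η, hη, hηD⟩ :=
    (hK.union hE).exists_cthickening_subset_open hD (union_subset hKD hED)
  have h_small : ∀ᶠ δ : ℝ in 𝓝 0, δ < κ ∧ L * δ < ε ∧ δ + δ < η := by
    have hκ' : ∀ᶠ δ : ℝ in 𝓝 0, δ < κ := eventually_lt_nhds hκ
    have hL' : ∀ᶠ δ : ℝ in 𝓝 0, L * δ < ε :=
      (continuous_const_mul L).continuousAt.eventually_lt continuousAt_const (by simpa using hε)
    have hη' : ∀ᶠ δ : ℝ in 𝓝 0, δ + δ < η :=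
      (continuous_id.add continuous_id).continuousAt.eventually_lt continuousAt_const
        (by simpa using hη)
    exact hκ'.and (hL'.and hη')
  obtain ⟨δ, ⟨hδκ, hLδ, hδη⟩, hδ⟩ :=
    ((h_small.filter_mono nhdsWithin_le_nhds).and (self_mem_nhdsWithin (s := Ioi 0))).exists
  have h_thick : cthickening (δ + δ) (K ∪ E) ⊆ D := (cthickening_mono hδη.le _).trans hηD
  have hδδ : δ ≤ δ + δ := le_add_of_nonneg_left (le_of_lt hδ)
  exact ⟨cthickening δ (K ∪ E), (cthickening_mono hδδ _).trans h_thick, (hK.union hE).cthickening,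
    h.mul_setIntegral_le hD hE.measurableSet hv hv_nonneg hε hεμ hδ hδκ hLδ (hK.union hE) h_thick
      subset_union_right fun z hz ↦ hKρ z ⟨hz.1, fun hzK ↦ hz.2 (.inl hzK)⟩⟩

lemma ofReal_mul_setLIntegral_le (h : IsAdaptedExhaustion D E ρ c κ L μ) {v : ℂ → ℝ}
    (hD : IsOpen D) (hE : IsCompact E) (hED : E ⊆ D) (hc : 0 ≤ c) (hκ : 0 < κ)
    (hv : ContSubharmonicOn v D) (hv_nonneg : ∀ z ∈ D, 0 ≤ v z) (hε : 0 < ε) (hεμ : 3 * ε < μ) :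
    ENNReal.ofReal c * ∫⁻ z in E, ENNReal.ofReal (v z) ≤
      ENNReal.ofReal (L ^ 2 / (2 * ε)) *
        ∫⁻ z in D ∩ {w | -3 * ε ≤ ρ w}, ENNReal.ofReal (v z) := by
  obtain ⟨K, hKD, hK, h_le⟩ := h.exists_mul_setIntegral_le hD hE hED hκ hv hv_nonneg hε hεμ
  have hN : MeasurableSet {w | -3 * ε ≤ ρ w} := measurableSet_le measurable_const h.measurable
  have hE_int : IntegrableOn v E := (hv.continuousOn.mono hED).integrableOn_compact hE
  have hK_int : IntegrableOn v (K ∩ {w | -3 * ε ≤ ρ w}) :=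
    ((hv.continuousOn.mono hKD).integrableOn_compact hK).mono_set inter_subset_left
  rw [← ofReal_integral_eq_lintegral_ofReal hE_int
      (ae_restrict_of_forall_mem hE.measurableSet fun z hz ↦ hv_nonneg z (hED hz)),
    ← ENNReal.ofReal_mul hc]
  refine (ENNReal.ofReal_le_ofReal h_le).trans ?_
  rw [ENNReal.ofReal_mul (by positivity), ofReal_integral_eq_lintegral_ofReal hK_int
    (ae_restrict_of_forall_mem (hK.measurableSet.inter hN) fun z hz ↦ hv_nonneg z (hKD hz.1))]
  gcongr

end IsAdaptedExhaustion

/-! ### Construction of an adapted exhaustion -/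

lemma exists_forall_le_neg_of_upperSemicontinuousOn {X : Type*} [TopologicalSpace X] {K : Set X}
    {ψ : X → EReal} (hK : IsCompact K) (hψ : UpperSemicontinuousOn ψ K)
    (hneg : ∀ x ∈ K, ψ x < 0) : ∃ m : ℝ, 0 < m ∧ ∀ x ∈ K, ψ x ≤ (-m : ℝ) := by
  rcases K.eq_empty_or_nonempty with rfl | hK_ne
  · exact ⟨1, one_pos, by simp⟩
  obtain ⟨x, hxK, hx⟩ := hψ.exists_isMaxOn hK_ne hK
  obtain ⟨r, hxr, hr⟩ := EReal.lt_iff_exists_real_btwn.1 (hneg x hxK)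
  refine ⟨-r, neg_pos.2 (mod_cast hr), fun y hy ↦ ?_⟩
  rw [neg_neg]
  exact (hx hy).trans hxr.le

section Collar

variable {D U : Set ℂ} {ψ : ℂ → EReal} {g : ℂ → ℝ}

lemma isCompact_diff_thickening_frontier (hDb : Bornology.IsBounded D) {t : ℝ}
    (ht : 0 < t) : IsCompact (D \ thickening t (frontier D)) := by
  have h_eq : D \ thickening t (frontier D) = closure D \ thickening t (frontier D) := by
    rw [closure_eq_self_union_frontier, union_sdiff_distrib,
      sdiff_eq_empty.2 (self_subset_thickening ht (frontier D)), union_empty]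
  rw [h_eq]
  exact hDb.isCompact_closure.diff isOpen_thickening

lemma isCompact_frontier_of_isBounded_s8 (hDb : Bornology.IsBounded D) : IsCompact (frontier D) :=
  hDb.isCompact_closure.of_isClosed_subset isClosed_frontier frontier_subset_closure

lemma exists_lipschitz_collar (hDb : Bornology.IsBounded D)
    (hψ : UpperSemicontinuousOn ψ D) (hneg : ∀ z ∈ D, ψ z < 0) (hU : IsOpen U)
    (hUbd : frontier D ⊆ U) (hg : LocallyLipschitzOn U g) (hψg : ∀ z ∈ U ∩ D, ψ z = g z) :
    ∃ L κ μ : ℝ, 0 < κ ∧ 0 < μ ∧ ∀ z ∈ D, (-μ : ℝ) < ψ z → ∀ w ∈ D, dist w z < κ →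
      ψ z = g z ∧ ψ w = g w ∧ |g w - g z| ≤ L * dist w z := by
  have h_cpt := isCompact_frontier_of_isBounded_s8 hDb
  obtain ⟨η, hη, hηU⟩ := h_cpt.exists_cthickening_subset_open hU hUbd
  obtain ⟨L, hL⟩ := LocallyLipschitzOn.exists_lipschitzOnWith_of_compact h_cpt.cthickening
    (hg.mono hηU)
  obtain ⟨μ, hμ, hψμ⟩ := exists_forall_le_neg_of_upperSemicontinuousOn
    (isCompact_diff_thickening_frontier hDb (half_pos hη)) (hψ.mono sdiff_subset)
    fun z hz ↦ hneg z hz.1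
  refine ⟨L, η / 2, μ, half_pos hη, hμ, fun z hz hzμ w hw hwz ↦ ?_⟩
  have hz_thick : z ∈ thickening (η / 2) (frontier D) := by
    by_contra h
    exact (hψμ z ⟨hz, h⟩).not_gt hzμ
  obtain ⟨p, hp, hzp⟩ := mem_thickening_iff.1 hz_thick
  have hzη : z ∈ cthickening η (frontier D) :=
    thickening_subset_cthickening_of_le (half_le_self hη.le) _ hz_thick
  have hwη : w ∈ cthickening η (frontier D) := thickening_subset_cthickening _ _
    (mem_thickening_iff.2 ⟨p, hp, by linarith [dist_triangle w z p]⟩)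
  exact ⟨hψg z ⟨hηU hzη, hz⟩, hψg w ⟨hηU hwη, hw⟩, hL.dist_le_mul w hwη z hzη⟩

lemma exists_isCompact_forall_neg_lt (hDb : Bornology.IsBounded D) (hU : IsOpen U)
    (hUbd : frontier D ⊆ U) (hg : ContinuousOn g U) (hg0 : ∀ z ∈ frontier D, g z = 0)
    (hψg : ∀ z ∈ U ∩ D, ψ z = g z) {ε : ℝ} (hε : 0 < ε) :
    ∃ K ⊆ D, IsCompact K ∧ ∀ z ∈ D \ K, (-ε : ℝ) < ψ z := by
  obtain ⟨t, ht, htU⟩ := (isCompact_frontier_of_isBounded_s8 hDb).exists_thickening_subset_open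
    (hg.isOpen_inter_preimage hU (isOpen_Ioi (a := -ε)))
    fun z hz ↦ ⟨hUbd hz, by simp [hg0 z hz, hε]⟩
  refine ⟨D \ thickening t (frontier D), sdiff_subset, isCompact_diff_thickening_frontier hDb ht,
    fun z hz ↦ ?_⟩
  have hz_thick : z ∈ thickening t (frontier D) := by
    by_contra h
    exact hz.2 ⟨hz.1, h⟩
  obtain ⟨hzU, hzε⟩ := htU hz_thick
  rw [hψg z ⟨hzU, hz.1⟩]
  exact EReal.coe_lt_coe_iff.2 hzε

end Collar

section QuadraticTruncation

variable {ψ : ℂ → EReal} {c q r : ℝ} {z : ℂ}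

/-- The function `ψ` truncated from below by the strictly subharmonic function `c ‖z‖² - q`. It is
real-valued wherever `ψ ≠ ⊤`. -/
noncomputable def quadraticTruncation (ψ : ℂ → EReal) (c q : ℝ) (z : ℂ) : ℝ :=
  (max (ψ z) (c * ‖z‖ ^ 2 - q : ℝ)).toReal

lemma coe_quadraticTruncation (hz : ψ z ≠ ⊤) :
    (quadraticTruncation ψ c q z : EReal) = max (ψ z) (c * ‖z‖ ^ 2 - q : ℝ) :=
  EReal.coe_toReal (max_lt hz.lt_top (EReal.coe_lt_top _)).ne
    ((EReal.bot_lt_coe _).trans_le (le_max_right _ _)).ne'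

lemma measurable_quadraticTruncation (hψ : Measurable ψ) (c q : ℝ) :
    Measurable (quadraticTruncation ψ c q) := by
  refine (hψ.max ?_).ereal_toReal
  exact (by fun_prop : Measurable fun z : ℂ ↦ c * ‖z‖ ^ 2 - q).coe_real_ereal

lemma le_quadraticTruncation (hz : ψ z ≠ ⊤) : c * ‖z‖ ^ 2 - q ≤ quadraticTruncation ψ c q z := by
  rw [← EReal.coe_le_coe_iff, coe_quadraticTruncation hz]
  exact le_max_right _ _

lemma quadraticTruncation_eq_of_le (hz : ψ z ≤ (c * ‖z‖ ^ 2 - q : ℝ)) :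
    quadraticTruncation ψ c q z = c * ‖z‖ ^ 2 - q := by
  rw [quadraticTruncation, max_eq_right hz, EReal.toReal_coe]

lemma coe_quadraticTruncation_of_lt (hz : ψ z ≠ ⊤)
    (h : c * ‖z‖ ^ 2 - q < quadraticTruncation ψ c q z) :
    (quadraticTruncation ψ c q z : EReal) = ψ z := by
  rw [coe_quadraticTruncation hz]
  rw [← EReal.coe_lt_coe_iff, coe_quadraticTruncation hz] at h
  exact max_eq_left ((lt_max_iff.1 h).resolve_right (lt_irrefl _)).le

lemma circleAverage_quadratic (c q : ℝ) (z : ℂ) (r : ℝ) :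
    circleAverage (fun w ↦ c * ‖w‖ ^ 2 - q) z r = c * ‖z‖ ^ 2 - q + c * r ^ 2 := by
  have h_int : CircleIntegrable (fun w : ℂ ↦ c * ‖w‖ ^ 2) z r :=
    ContinuousOn.circleIntegrable' (by fun_prop)
  have h_smul : circleAverage (fun w : ℂ ↦ c * ‖w‖ ^ 2) z r = c * (‖z‖ ^ 2 + r ^ 2) := by
    rw [← circleAverage_norm_sq z r]
    exact Real.circleAverage_fun_smul (a := c)
  rw [Real.circleAverage_fun_sub h_int (circleIntegrable_const q z r), h_smul,
    Real.circleAverage_const]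
  ring

lemma circleIntegrable_quadratic (c q : ℝ) (z : ℂ) (r : ℝ) :
    CircleIntegrable (fun w : ℂ ↦ c * ‖w‖ ^ 2 - q) z r :=
  ContinuousOn.circleIntegrable' (by fun_prop)

lemma abs_quadraticTruncation_le (hz : ψ z ≤ 0) (hc : 0 ≤ c) (hq : c * ‖z‖ ^ 2 ≤ q) :
    |quadraticTruncation ψ c q z| ≤ q := by
  have hz_top : ψ z ≠ ⊤ := (hz.trans_lt EReal.zero_lt_top).ne
  have h_nonpos : quadraticTruncation ψ c q z ≤ 0 := by
    rw [← EReal.coe_le_coe_iff, coe_quadraticTruncation hz_top]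
    exact max_le hz (EReal.coe_le_coe_iff.2 (by linarith))
  have h_le := le_quadraticTruncation (c := c) (q := q) hz_top
  have h_sq : 0 ≤ c * ‖z‖ ^ 2 := by positivity
  exact abs_le.2 ⟨by linarith, by linarith⟩

lemma circleIntegrable_quadraticTruncation (hψ : Measurable ψ) (hc : 0 ≤ c)
    (hneg : ∀ w ∈ sphere z |r|, ψ w ≤ 0) (hq : ∀ w ∈ sphere z |r|, c * ‖w‖ ^ 2 ≤ q) :
    CircleIntegrable (quadraticTruncation ψ c q) z r :=
  circleIntegrable_of_norm_le ((measurable_quadraticTruncation hψ c q).comp (by fun_prop))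
    fun w hw ↦ abs_quadraticTruncation_le (hneg w hw) hc (hq w hw)

lemma quadratic_add_le_circleAverage_quadraticTruncation (hψ : Measurable ψ) (hc : 0 ≤ c)
    (hneg : ∀ w ∈ sphere z |r|, ψ w ≤ 0) (hq : ∀ w ∈ sphere z |r|, c * ‖w‖ ^ 2 ≤ q) :
    c * ‖z‖ ^ 2 - q + c * r ^ 2 ≤ circleAverage (quadraticTruncation ψ c q) z r := by
  rw [← circleAverage_quadratic]
  exact Real.circleAverage_mono (circleIntegrable_quadratic c q z r)
    (circleIntegrable_quadraticTruncation hψ hc hneg hq)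
    fun w hw ↦ le_quadraticTruncation ((hneg w hw).trans_lt EReal.zero_lt_top).ne

lemma circleAvgE_le_circleAverage_quadraticTruncation_zero (ψ : ℂ → EReal) (z : ℂ) (r : ℝ) (n : ℕ) :
    circleAvgE ψ z r ≤ circleAverage (quadraticTruncation ψ 0 n) z r := by
  have h_trunc (w : ℂ) :
      (max (ψ w) ((-(n : ℝ) : ℝ) : EReal)).toReal = quadraticTruncation ψ 0 n w := by
    simp [quadraticTruncation]
  refine (iInf_le _ n).trans (EReal.coe_le_coe_iff.2 ?_)
  simp only [h_trunc]
  rfl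

lemma circleAvgE_le_circleAverage_quadraticTruncation (hψ : Measurable ψ) (hc : 0 ≤ c)
    (hneg : ∀ w ∈ sphere z |r|, ψ w ≤ 0) (hq : ∀ w ∈ sphere z |r|, c * ‖w‖ ^ 2 ≤ q) :
    circleAvgE ψ z r ≤ circleAverage (quadraticTruncation ψ c q) z r := by
  obtain ⟨n, hn⟩ := exists_nat_ge q
  refine (circleAvgE_le_circleAverage_quadraticTruncation_zero ψ z r n).trans
    (EReal.coe_le_coe_iff.2 ?_)
  refine Real.circleAverage_mono
    (circleIntegrable_quadraticTruncation hψ le_rfl hneg (by simp))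
    (circleIntegrable_quadraticTruncation hψ hc hneg hq) fun w hw ↦ ?_
  have hw_top : ψ w ≠ ⊤ := ((hneg w hw).trans_lt EReal.zero_lt_top).ne
  rw [← EReal.coe_le_coe_iff, coe_quadraticTruncation hw_top, coe_quadraticTruncation hw_top]
  refine max_le_max_left _ (EReal.coe_le_coe_iff.2 ?_)
  have h_sq : 0 ≤ c * ‖w‖ ^ 2 := by positivity
  linarith

lemma quadraticTruncation_le_circleAverage (hψ : Measurable ψ) (hc : 0 ≤ c)
    (hneg : ∀ w ∈ sphere z |r|, ψ w ≤ 0) (hq : ∀ w ∈ sphere z |r|, c * ‖w‖ ^ 2 ≤ q)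
    (hz : ψ z ≠ ⊤) (hsub : ψ z ≤ circleAvgE ψ z r) :
    quadraticTruncation ψ c q z ≤ circleAverage (quadraticTruncation ψ c q) z r := by
  have h_quad : c * ‖z‖ ^ 2 - q ≤ circleAverage (quadraticTruncation ψ c q) z r :=
    le_trans (le_add_of_nonneg_right (by positivity))
      (quadratic_add_le_circleAverage_quadraticTruncation hψ hc hneg hq)
  rw [← EReal.coe_le_coe_iff, coe_quadraticTruncation hz]
  exact max_le (hsub.trans (circleAvgE_le_circleAverage_quadraticTruncation hψ hc hneg hq))
    (EReal.coe_le_coe_iff.2 h_quad)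

lemma abs_quadraticTruncation_sub_le {w : ℂ} {a b C : ℝ} (hz : ψ z = a) (hw : ψ w = b)
    (hzq : c * ‖z‖ ^ 2 - q < quadraticTruncation ψ c q z)
    (hwq : c * ‖w‖ ^ 2 - q < quadraticTruncation ψ c q z) (h : |b - a| ≤ C) :
    |quadraticTruncation ψ c q w - quadraticTruncation ψ c q z| ≤ C := by
  have hz_eq : quadraticTruncation ψ c q z = a := by
    rw [← EReal.coe_eq_coe_iff, coe_quadraticTruncation_of_lt (by simp [hz]) hzq, hz]
  have hw_eq : quadraticTruncation ψ c q w = max b (c * ‖w‖ ^ 2 - q) := by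
    rw [quadraticTruncation, hw, ← EReal.coe_strictMono.monotone.map_max, EReal.toReal_coe]
  rw [hz_eq] at hwq ⊢
  rw [hw_eq]
  obtain ⟨h_lower, h_upper⟩ := abs_le.1 h
  have h_max : b ≤ max b (c * ‖w‖ ^ 2 - q) := le_max_left _ _
  have h_max' : max b (c * ‖w‖ ^ 2 - q) ≤ C + a :=
    max_le (by linarith) (by linarith [abs_nonneg (b - a)])
  exact abs_le.2 ⟨by linarith, by linarith⟩

lemma isAdaptedExhaustion_quadraticTruncation {D E : Set ℂ} {g : ℂ → ℝ} {κ L μ : ℝ}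
    (hψm : Measurable ψ) (hψ : SubharmonicOnE ψ D) (hneg : ∀ z ∈ D, ψ z < 0) (hc : 0 ≤ c)
    (hq : 0 ≤ q) (hcq : ∀ z ∈ D, c * ‖z‖ ^ 2 ≤ q / 2) (hμ : μ ≤ q / 2)
    (hE : ∀ z ∈ E, ψ z ≤ (-q : ℝ)) (hED : cthickening κ E ⊆ D)
    (h_collar : ∀ z ∈ D, (-μ : ℝ) < ψ z → ∀ w ∈ D, dist w z < κ →
      ψ z = g z ∧ ψ w = g w ∧ |g w - g z| ≤ L * dist w z)
    (h_exh : ∀ ε > (0 : ℝ), ∃ K ⊆ D, IsCompact K ∧ ∀ z ∈ D \ K, (-ε : ℝ) < ψ z) :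
    IsAdaptedExhaustion D E (quadraticTruncation ψ c q) c κ L μ := by
  have hq' (z : ℂ) (hz : z ∈ D) : c * ‖z‖ ^ 2 ≤ q := (hcq z hz).trans (half_le_self hq)
  have h_top (z : ℂ) (hz : z ∈ D) : ψ z ≠ ⊤ := ((hneg z hz).trans EReal.zero_lt_top).ne
  have h_sphere (z : ℂ) (r : ℝ) (hr : 0 < r) (hz : closedBall z r ⊆ D) : sphere z |r| ⊆ D := by
    rw [abs_of_pos hr]
    exact sphere_subset_closedBall.trans hz
  have hE_eq (z : ℂ) (hz : z ∈ E) : quadraticTruncation ψ c q z = c * ‖z‖ ^ 2 - q := by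
    refine quadraticTruncation_eq_of_le ((hE z hz).trans (EReal.coe_le_coe_iff.2 ?_))
    have h_sq : 0 ≤ c * ‖z‖ ^ 2 := by positivity
    linarith
  refine ⟨measurable_quadraticTruncation hψm c q,
    ⟨q, fun z hz ↦ abs_quadraticTruncation_le (hneg z hz).le hc (hq' z hz)⟩,
    fun z hz r hr hzr ↦ ?_, fun z hz r hr hrκ ↦ ?_, fun z hz hzμ w hw hwz ↦ ?_,
    fun ε hε ↦ ?_, fun z hz ↦ ?_⟩
  · exact quadraticTruncation_le_circleAverage hψm hc
      (fun w hw ↦ (hneg w (h_sphere z r hr hzr hw)).le)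
      (fun w hw ↦ hq' w (h_sphere z r hr hzr hw)) (h_top z hz) (hψ.2.2.2 z hz r hr hzr)
  · have hzr : closedBall z r ⊆ D :=
      ((closedBall_subset_cthickening hz r).trans (cthickening_mono hrκ.le E)).trans hED
    rw [hE_eq z hz]
    exact quadratic_add_le_circleAverage_quadraticTruncation hψm hc
      (fun w hw ↦ (hneg w (h_sphere z r hr hzr hw)).le) fun w hw ↦ hq' w (h_sphere z r hr hzr hw)
  · have hz_eq := coe_quadraticTruncation_of_lt (c := c) (q := q) (h_top z hz)
      (by linarith [hcq z hz])
    obtain ⟨hzg, hwg, h_lip⟩ :=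
      h_collar z hz (hz_eq ▸ EReal.coe_lt_coe_iff.2 hzμ) w hw hwz
    exact abs_quadraticTruncation_sub_le hzg hwg (by linarith [hcq z hz])
      (by linarith [hcq w hw]) h_lip
  · obtain ⟨K, hKD, hK, hKε⟩ := h_exh ε hε
    refine ⟨K, hKD, hK, fun z hz ↦ EReal.coe_lt_coe_iff.1 ((hKε z hz).trans_le ?_)⟩
    rw [coe_quadraticTruncation (h_top z hz.1)]
    exact le_max_left _ _
  · rw [hE_eq z hz]
    linarith [hcq z (hED (self_subset_cthickening E hz))]

end QuadraticTruncation

lemma exists_isAdaptedExhaustion {D E U : Set ℂ} {ψ : ℂ → EReal} {g : ℂ → ℝ} (hD : IsOpen D)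
    (hDb : Bornology.IsBounded D) (hψm : Measurable ψ) (hψ : SubharmonicOnE ψ D)
    (hneg : ∀ z ∈ D, ψ z < 0) (hU : IsOpen U) (hUbd : frontier D ⊆ U)
    (hg : LocallyLipschitzOn U g) (hg0 : ∀ z ∈ frontier D, g z = 0)
    (hψg : ∀ z ∈ U ∩ D, ψ z = g z) (hE : IsCompact E) (hED : E ⊆ D) :
    ∃ (ρ : ℂ → ℝ) (c κ L μ : ℝ), 0 < c ∧ 0 < κ ∧ 0 < μ ∧ IsAdaptedExhaustion D E ρ c κ L μ ∧
      ∀ z ∈ D, -μ < ρ z → ρ z = ψ z := by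
  obtain ⟨R, hR⟩ := hDb.exists_norm_le
  obtain ⟨η, hη, hηD⟩ := hE.exists_cthickening_subset_open hD hED
  obtain ⟨q, hq, hEq⟩ := exists_forall_le_neg_of_upperSemicontinuousOn hE (hψ.1.mono hED)
    fun z hz ↦ hneg z (hED hz)
  obtain ⟨L, κ, μ, hκ, hμ, h_collar⟩ := exists_lipschitz_collar hDb hψ.1 hneg hU hUbd hg hψg
  set c := q / (2 * (R ^ 2 + 1))
  have hc : 0 < c := by positivity
  have hcq (z : ℂ) (hz : z ∈ D) : c * ‖z‖ ^ 2 ≤ q / 2 := by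
    have h_sq : ‖z‖ ^ 2 ≤ R ^ 2 + 1 := by
      linarith [pow_le_pow_left₀ (norm_nonneg z) (hR z hz) 2]
    calc c * ‖z‖ ^ 2 ≤ c * (R ^ 2 + 1) := by gcongr
      _ = q / 2 := by simp only [c]; field_simp
  refine ⟨quadraticTruncation ψ c q, c, min η κ, L, min (q / 2) μ, hc, lt_min hη hκ,
    lt_min (half_pos hq) hμ, ?_, fun z hz hzμ ↦ ?_⟩
  · refine isAdaptedExhaustion_quadraticTruncation (g := g) hψm hψ hneg hc.le hq.le hcq
      (min_le_left _ _) hEq ((cthickening_mono (min_le_left _ _) E).trans hηD)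
      (fun z hz hzμ w hw hwz ↦ ?_)
      fun ε hε ↦ exists_isCompact_forall_neg_lt hDb hU hUbd hg.continuousOn hg0 hψg hε
    refine h_collar z hz (lt_of_le_of_lt ?_ hzμ) w hw (hwz.trans_le (min_le_right _ _))
    exact EReal.coe_le_coe_iff.2 (neg_le_neg (min_le_right _ _))
  · exact coe_quadraticTruncation_of_lt ((hneg z hz).trans EReal.zero_lt_top).ne
      (by linarith [hcq z hz, min_le_left (q / 2) μ])

/-! ### Harmonic majorants from boundary mass -/

section HarmonicMajorant

variable {D E : Set ℂ} {ψ : ℂ → EReal} {u v ρ : ℂ → ℝ} {c κ L μ r : ℝ}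

lemma IsAdaptedExhaustion.ofReal_mul_setLIntegral_le_div (h : IsAdaptedExhaustion D E ρ c κ L μ)
    (hρψ : ∀ z ∈ D, -μ < ρ z → ρ z = ψ z) (hD : IsOpen D) (hE : IsCompact E) (hED : E ⊆ D)
    (hc : 0 ≤ c) (hκ : 0 < κ) (hv : ContSubharmonicOn v D) (hv_nonneg : ∀ z ∈ D, 0 ≤ v z)
    (hr : 0 < r) (hr1 : r < 1) (hrμ : -μ < Real.log r)
    (hvu : ∀ z ∈ D, (Real.log r : ℝ) ≤ ψ z → v z = u z) :
    ENNReal.ofReal c * ∫⁻ z in E, ENNReal.ofReal (v z) ≤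
      ENNReal.ofReal (3 * L ^ 2 / 2) *
        ((∫⁻ z in {z | z ∈ D ∧ ((Real.log r : ℝ) : EReal) ≤ ψ z}, ENNReal.ofReal (u z)) /
          ENNReal.ofReal (1 - r)) := by
  have h_log : 1 - r ≤ -Real.log r := by linarith [Real.log_le_sub_one_of_pos hr]
  set ε := -Real.log r / 3 with hε
  have h_levels : D ∩ {z | -3 * ε ≤ ρ z} ⊆ {z | z ∈ D ∧ ((Real.log r : ℝ) : EReal) ≤ ψ z} := by
    rintro z ⟨hzD, hz : -3 * ε ≤ ρ z⟩
    refine ⟨hzD, hρψ z hzD (by linarith) ▸ EReal.coe_le_coe_iff.2 (by linarith)⟩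
  have h_meas : MeasurableSet (D ∩ {z | -3 * ε ≤ ρ z}) :=
    hD.measurableSet.inter (measurableSet_le measurable_const h.measurable)
  have h_coeff : L ^ 2 / (2 * ε) ≤ 3 * L ^ 2 / 2 / (1 - r) := by
    rw [show L ^ 2 / (2 * ε) = 3 * L ^ 2 / 2 / -Real.log r by rw [hε]; field_simp]
    gcongr
  calc ENNReal.ofReal c * ∫⁻ z in E, ENNReal.ofReal (v z)
      ≤ ENNReal.ofReal (L ^ 2 / (2 * ε)) * ∫⁻ z in D ∩ {z | -3 * ε ≤ ρ z}, ENNReal.ofReal (v z) :=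
        h.ofReal_mul_setLIntegral_le hD hE hED hc hκ hv hv_nonneg (by linarith) (by linarith)
    _ = ENNReal.ofReal (L ^ 2 / (2 * ε)) *
          ∫⁻ z in D ∩ {z | -3 * ε ≤ ρ z}, ENNReal.ofReal (u z) := by
        congr 1
        exact setLIntegral_congr_fun h_meas fun z hz ↦ by
          simp only [hvu z (h_levels hz).1 (h_levels hz).2]
    _ ≤ ENNReal.ofReal (3 * L ^ 2 / 2 / (1 - r)) *
          ∫⁻ z in {z | z ∈ D ∧ ((Real.log r : ℝ) : EReal) ≤ ψ z}, ENNReal.ofReal (u z) := by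
        gcongr
    _ = _ := by
        rw [ENNReal.ofReal_div_of_pos (by linarith), ENNReal.div_eq_inv_mul,
          ENNReal.div_eq_inv_mul]
        ring

/-- The bound does not depend on `v`, which may be arbitrarily large in the interior: the mass of
`v` near the boundary is that of `u`. -/
lemma IsAdaptedExhaustion.exists_setLIntegral_le (h : IsAdaptedExhaustion D E ρ c κ L μ)
    (hρψ : ∀ z ∈ D, -μ < ρ z → ρ z = ψ z) (hD : IsOpen D) (hE : IsCompact E) (hED : E ⊆ D)
    (hc : 0 < c) (hκ : 0 < κ) (hμ : 0 < μ) (hψ : UpperSemicontinuousOn ψ D)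
    (hneg : ∀ z ∈ D, ψ z < 0)
    (hliminf : liminf (fun r : ℝ ↦
        (∫⁻ z in {z | z ∈ D ∧ ((Real.log r : ℝ) : EReal) ≤ ψ z}, ENNReal.ofReal (u z)) /
          ENNReal.ofReal (1 - r)) (𝓝[<] 1) < ⊤) :
    ∃ M : ENNReal, M ≠ ⊤ ∧ ∀ v, ContSubharmonicOn v D → (∀ z ∈ D, 0 ≤ v z) →
      (∃ K ⊆ D, IsCompact K ∧ ∀ z ∈ D \ K, v z = u z) → ∫⁻ z in E, ENNReal.ofReal (v z) ≤ M := by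
  obtain ⟨M, h_lt, hM⟩ := exists_between hliminf
  have h_freq := frequently_lt_of_liminf_lt (by isBoundedDefault) h_lt
  have hc_ne : ENNReal.ofReal c ≠ 0 := (ENNReal.ofReal_pos.2 hc).ne'
  refine ⟨ENNReal.ofReal (3 * L ^ 2 / 2) * M / ENNReal.ofReal c,
    ENNReal.div_ne_top (ENNReal.mul_ne_top ENNReal.ofReal_ne_top hM.ne) hc_ne,
    fun v hv hv_nonneg ⟨K, hKD, hK, hvu⟩ ↦ ?_⟩
  obtain ⟨m, hm, hKm⟩ := exists_forall_le_neg_of_upperSemicontinuousOn hK (hψ.mono hKD)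
    fun z hz ↦ hneg z (hKD hz)
  have h_near : ∀ᶠ r : ℝ in 𝓝 1, 0 < r ∧ -min m μ < Real.log r :=
    (eventually_gt_nhds one_pos).and ((Real.continuousAt_log one_ne_zero).eventually_const_lt
      (by simpa using lt_min hm hμ))
  obtain ⟨r, hrM, ⟨hr, hr_log⟩, hr1⟩ := (h_freq.and_eventually
    ((h_near.filter_mono nhdsWithin_le_nhds).and (self_mem_nhdsWithin (s := Iio 1)))).exists
  have hr_m : -m < Real.log r := by linarith [min_le_left m μ]
  rw [ENNReal.le_div_iff_mul_le (.inl hc_ne) (.inl ENNReal.ofReal_ne_top), mul_comm]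
  refine (h.ofReal_mul_setLIntegral_le_div hρψ hD hE hED hc.le hκ hv hv_nonneg hr hr1
    (by linarith [min_le_right m μ]) fun z hz hz_log ↦ hvu z ⟨hz, fun hzK ↦ ?_⟩).trans
    (mul_le_mul_right hrM.le _)
  exact (hKm z hzK).not_gt ((EReal.coe_lt_coe_iff.2 hr_m).trans_le hz_log)

lemma le_of_setLIntegral_cthickening_le {K : Set ℂ} {η : ℝ} {M : ENNReal} (hη : 0 < η)
    (hKD : cthickening η K ⊆ D) (hM : M ≠ ⊤) (hv : ContSubharmonicOn v D)
    (hv_nonneg : ∀ z ∈ D, 0 ≤ v z)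
    (hvM : ∫⁻ z in cthickening η K, ENNReal.ofReal (v z) ≤ M) {z : ℂ} (hz : z ∈ K) :
    v z ≤ M.toReal / (Real.pi * η ^ 2) := by
  have h_ball : closedBall z η ⊆ cthickening η K := closedBall_subset_cthickening hz η
  have h_le : ENNReal.ofReal (Real.pi * η ^ 2 * v z) ≤ M :=
    (hv.ofReal_mul_le_lintegral hv_nonneg hη.le (h_ball.trans hKD)).trans
      ((lintegral_mono_set (ball_subset_closedBall.trans h_ball)).trans hvM)
  rw [le_div_iff₀' (by positivity)]
  exact (ENNReal.ofReal_le_iff_le_toReal hM).1 h_le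

/-- Balayage only changes a function on a compact disc, so it preserves the integral bound near the
boundary and therefore local boundedness. -/
lemma exists_harmonicOnNhd_ge_of_exists_setLIntegral_le (hD : IsOpen D)
    (hu : ContSubharmonicOn u D) (hu_nonneg : ∀ z ∈ D, 0 ≤ u z)
    (h : ∀ E ⊆ D, IsCompact E → ∃ M : ENNReal, M ≠ ⊤ ∧ ∀ v, ContSubharmonicOn v D →
      (∀ z ∈ D, 0 ≤ v z) → (∃ K ⊆ D, IsCompact K ∧ ∀ z ∈ D \ K, v z = u z) →
      ∫⁻ z in E, ENNReal.ofReal (v z) ≤ M) :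
    ∃ V : ℂ → ℝ, HarmonicOnNhd V D ∧ ∀ z ∈ D, u z ≤ V z := by
  refine exists_harmonicOnNhd_ge (F := {v | ContSubharmonicOn v D ∧ (∀ z ∈ D, 0 ≤ v z) ∧
    ∃ K ⊆ D, IsCompact K ∧ ∀ z ∈ D \ K, v z = u z}) hD
    ⟨hu, hu_nonneg, ∅, empty_subset D, isCompact_empty, fun _ _ ↦ rfl⟩ (fun v hv ↦ hv.1) ?_ ?_
  · rintro v ⟨hv, hv_nonneg, K, hKD, hK, hvu⟩ a R hR haD
    refine ⟨hv.poissonModification hD hR haD,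
      fun z hz ↦ (hv_nonneg z hz).trans (hv.le_poissonModification haD z),
      K ∪ closedBall a R, union_subset hKD haD, hK.union (isCompact_closedBall a R),
      fun z hz ↦ ?_⟩
    rw [poissonModification_of_notMem fun hza ↦ hz.2 (.inr (ball_subset_closedBall hza))]
    exact hvu z ⟨hz.1, fun hzK ↦ hz.2 (.inl hzK)⟩
  · intro K hKD hK
    obtain ⟨η, hη, hηD⟩ := hK.exists_cthickening_subset_open hD hKD
    obtain ⟨M, hM, h_bound⟩ := h _ hηD hK.cthickening
    exact ⟨_, fun v hv z hz ↦
      le_of_setLIntegral_cthickening_le hη hηD hM hv.1 hv.2.1 (h_bound v hv.1 hv.2.1 hv.2.2) hz⟩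

lemma exists_harmonicOnNhd_ge_of_liminf_lt_top {U : Set ℂ} {g : ℂ → ℝ} (hD : IsOpen D)
    (hDb : Bornology.IsBounded D) (hψm : Measurable ψ) (hψ : SubharmonicOnE ψ D)
    (hneg : ∀ z ∈ D, ψ z < 0) (hU : IsOpen U) (hUbd : frontier D ⊆ U)
    (hg : LocallyLipschitzOn U g) (hg0 : ∀ z ∈ frontier D, g z = 0)
    (hψg : ∀ z ∈ U ∩ D, ψ z = g z) (hu : ContSubharmonicOn u D) (hu_nonneg : ∀ z ∈ D, 0 ≤ u z)
    (hliminf : liminf (fun r : ℝ ↦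
        (∫⁻ z in {z | z ∈ D ∧ ((Real.log r : ℝ) : EReal) ≤ ψ z}, ENNReal.ofReal (u z)) /
          ENNReal.ofReal (1 - r)) (𝓝[<] 1) < ⊤) :
    ∃ V : ℂ → ℝ, HarmonicOnNhd V D ∧ ∀ z ∈ D, u z ≤ V z := by
  refine exists_harmonicOnNhd_ge_of_exists_setLIntegral_le hD hu hu_nonneg fun E hED hE ↦ ?_
  obtain ⟨ρ, c, κ, L, μ, hc, hκ, hμ, h_exh, hρψ⟩ :=
    exists_isAdaptedExhaustion hD hDb hψm hψ hneg hU hUbd hg hg0 hψg hE hED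
  exact h_exh.exists_setLIntegral_le hρψ hD hE hED hc hκ hμ hψ.1 hneg hliminf

end HarmonicMajorant

/-! ### The strong maximum principle -/

lemma circleAverage_lt_of_eventually_lt {g : ℂ → ℝ} {z w : ℂ} {r m : ℝ}
    (hg : CircleIntegrable g z r) (hle : ∀ x ∈ sphere z |r|, g x ≤ m) (hw : w ∈ sphere z |r|)
    (hlt : ∀ᶠ x in 𝓝[sphere z |r|] w, g x < m) : circleAverage g z r < m := by
  obtain ⟨η, rfl⟩ : ∃ η, circleMap z r (Real.pi + η) = w := by
    rw [← range_circleMap] at hw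
    obtain ⟨θ, rfl⟩ := hw
    exact ⟨θ - Real.pi, by rw [add_sub_cancel]⟩
  have h_int : IntervalIntegrable (fun θ ↦ g (circleMap z r (θ + η))) volume 0 (2 * Real.pi) := by
    have h_circle : IntervalIntegrable (g ∘ circleMap z r) volume 0 (0 + 2 * Real.pi) := by
      rwa [zero_add]
    simpa using (((periodic_circleMap z r).comp g).intervalIntegrable Real.two_pi_pos.ne'
      h_circle η (2 * Real.pi + η)).comp_add_right η
  have h_near : ∀ᶠ θ in 𝓝 Real.pi, g (circleMap z r (θ + η)) < m := by
    refine Tendsto.eventually (tendsto_nhdsWithin_iff.2 ⟨?_, ?_⟩) hlt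
    · exact ((continuous_circleMap z r).comp (continuous_add_const η)).tendsto _
    · exact Eventually.of_forall fun θ ↦ circleMap_mem_sphere' z r _
  have h_pos : 0 < (volume.restrict (Ioc 0 (2 * Real.pi))) {θ | g (circleMap z r (θ + η)) < m} :=
    ((Measure.measure_pos_of_mem_nhds volume (inter_mem h_near
      (Ioc_mem_nhds Real.pi_pos (by linarith [Real.pi_pos]))))).trans_le
      (Measure.le_restrict_apply _ _)
  have h_lt := intervalIntegral.integral_lt_integral_of_ae_le_of_measure_setOfPred_lt_ne_zero
    Real.two_pi_pos.le h_int intervalIntegrable_const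
    (ae_of_all _ fun θ ↦ hle _ (circleMap_mem_sphere' z r _)) h_pos.ne'
  rw [intervalIntegral.integral_const, sub_zero, smul_eq_mul] at h_lt
  rwa [Real.circleAverage_eq_integral_add η, smul_eq_mul, inv_mul_lt_iff₀ Real.two_pi_pos]

section StrongMaximumPrinciple

variable {D : Set ℂ} {ψ : ℂ → EReal} {z w z₀ : ℂ} {m r : ℝ}

lemma circleAvgE_lt_of_eventually_lt (hψ : Measurable ψ) (hle : ∀ x ∈ sphere z |r|, ψ x ≤ m)
    (hw : w ∈ sphere z |r|) (hlt : ∀ᶠ x in 𝓝[sphere z |r|] w, ψ x < m) : circleAvgE ψ z r < m := by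
  obtain ⟨n, hn⟩ := exists_nat_gt (-m)
  have h_top : ∀ x ∈ sphere z |r|, ψ x ≠ ⊤ := fun x hx ↦
    ((hle x hx).trans_lt (EReal.coe_lt_top m)).ne
  have h_quad (x : ℂ) : ((0 * ‖x‖ ^ 2 - n : ℝ) : EReal) < m := EReal.coe_lt_coe_iff.2 (by linarith)
  have h_le : ∀ x ∈ sphere z |r|, quadraticTruncation ψ 0 n x ≤ m := fun x hx ↦ by
    rw [← EReal.coe_le_coe_iff, coe_quadraticTruncation (h_top x hx)]
    exact max_le (hle x hx) (h_quad x).le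
  have h_ge : ∀ x ∈ sphere z |r|, -(n : ℝ) ≤ quadraticTruncation ψ 0 n x := fun x hx ↦ by
    simpa using le_quadraticTruncation (c := 0) (q := n) (h_top x hx)
  have h_int : CircleIntegrable (quadraticTruncation ψ 0 n) z r :=
    circleIntegrable_of_norm_le ((measurable_quadraticTruncation hψ 0 n).comp (by fun_prop))
      fun x hx ↦ abs_le_max_abs_abs (h_ge x hx) (h_le x hx)
  refine (circleAvgE_le_circleAverage_quadraticTruncation_zero ψ z r n).trans_lt
    (EReal.coe_lt_coe_iff.2 (circleAverage_lt_of_eventually_lt h_int h_le hw ?_))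
  filter_upwards [hlt, self_mem_nhdsWithin] with x hx hx_mem
  rw [← EReal.coe_lt_coe_iff, coe_quadraticTruncation (h_top x hx_mem)]
  exact max_lt hx (h_quad x)

namespace SubharmonicOnE

lemma eventually_eq_of_forall_le (hψ : SubharmonicOnE ψ D) (hψm : Measurable ψ) (hD : IsOpen D)
    (hle : ∀ x ∈ D, ψ x ≤ m) (hz : z ∈ D) (hzm : ψ z = m) : ∀ᶠ w in 𝓝 z, ψ w = m := by
  obtain ⟨R, hR, hRD⟩ := nhds_basis_closedBall.mem_iff.1 (hD.mem_nhds hz)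
  filter_upwards [ball_mem_nhds z hR] with w hwR
  rcases eq_or_ne w z with rfl | hwz
  · exact hzm
  have h_disc : closedBall z (dist w z) ⊆ D := (closedBall_subset_closedBall hwR.le).trans hRD
  have h_sphere : sphere z |dist w z| ⊆ D := by
    rw [abs_of_nonneg dist_nonneg]
    exact sphere_subset_closedBall.trans h_disc
  have hw : w ∈ sphere z |dist w z| := by simp [dist_eq_norm]
  by_contra h_ne
  have h_lt : ∀ᶠ x in 𝓝[sphere z |dist w z|] w, ψ x < m :=
    hψ.1.mono h_sphere w hw _ ((hle w (h_sphere hw)).lt_of_ne h_ne)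
  exact ((hψ.2.2.2 z hz _ (dist_pos.2 hwz) h_disc).trans_lt (circleAvgE_lt_of_eventually_lt hψm
    (fun x hx ↦ hle x (h_sphere hx)) hw h_lt)).ne hzm

lemma eq_of_forall_le (hψ : SubharmonicOnE ψ D) (hψm : Measurable ψ) (hD : IsOpen D)
    (hDc : IsPreconnected D) (hle : ∀ x ∈ D, ψ x ≤ m) (hz : z ∈ D) (hzm : ψ z = m) :
    ∀ w ∈ D, ψ w = m := by
  obtain ⟨O, hO, hDO⟩ := upperSemicontinuousOn_iff_preimage_Iio.1 hψ.1 m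
  have h_lt {w : ℂ} (hw : w ∈ D) : ψ w < m ↔ w ∈ O := by
    simpa [hw] using Set.ext_iff.1 hDO w
  have h_sub : D ⊆ interior {w | ψ w = m} ∪ O := fun w hw ↦ (hle w hw).eq_or_lt.imp
    (fun h ↦ mem_interior_iff_mem_nhds.2 (hψ.eventually_eq_of_forall_le hψm hD hle hw h))
    (h_lt hw).1
  intro w hw
  by_contra h_ne
  obtain ⟨x, hxD, hx_eq, hxO⟩ := hDc _ O isOpen_interior hO h_sub
    ⟨z, hz, mem_interior_iff_mem_nhds.2 (hψ.eventually_eq_of_forall_le hψm hD hle hz hzm)⟩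
    ⟨w, hw, (h_lt hw).1 ((hle w hw).lt_of_ne h_ne)⟩
  exact ((h_lt hxD).2 hxO).ne (interior_subset (s := {w | ψ w = m}) hx_eq)

end SubharmonicOnE

lemma eventually_lt_of_lelongNumber_pos (h : 0 < lelongNumber ψ z₀) (m : ℝ) :
    ∀ᶠ z in 𝓝[≠] z₀, ψ z < m := by
  obtain ⟨a, ⟨-, C, r, hr, hψ⟩, ha⟩ := exists_lt_of_lt_csSup
    (nonempty_iff_ne_empty.2 fun h_empty ↦ h.ne' (by rw [lelongNumber, h_empty, Real.sSup_empty])) h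
  have h_log : Tendsto (fun z ↦ a * Real.log (dist z z₀) + C) (𝓝[≠] z₀) atBot := by
    simp only [dist_eq_norm]
    exact tendsto_atBot_add_const_right _ _
      ((Real.tendsto_log_nhdsGT_zero.comp (tendsto_norm_sub_self_nhdsNE z₀)).const_mul_atBot ha)
  filter_upwards [h_log.eventually_lt_atBot m, self_mem_nhdsWithin,
    mem_nhdsWithin_of_mem_nhds (ball_mem_nhds z₀ hr)] with z hzm hz hzr
  exact (hψ z hz hzr).trans_lt (EReal.coe_lt_coe_iff.2 hzm)

lemma SubharmonicOnE.neg_of_lelongNumber_pos (hψ : SubharmonicOnE ψ D) (hψm : Measurable ψ)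
    (hD : IsOpen D) (hDc : IsPreconnected D) (hDb : Bornology.IsBounded D)
    (husc : UpperSemicontinuousOn ψ (closure D)) (hbd : ∀ z ∈ frontier D, ψ z ≤ 0) (hz₀ : z₀ ∈ D)
    (hl : 0 < lelongNumber ψ z₀) : ∀ z ∈ D, ψ z < 0 := by
  obtain ⟨x, hx, hmax⟩ := husc.exists_isMaxOn ⟨z₀, subset_closure hz₀⟩ hDb.isCompact_closure
  by_contra! ⟨y, hyD, hy⟩
  obtain ⟨p, hpD, hp⟩ : ∃ p ∈ D, ∀ w ∈ D, ψ w ≤ ψ p := by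
    rcases closure_eq_self_union_frontier D ▸ hx with hxD | hx_frontier
    · exact ⟨x, hxD, fun w hw ↦ hmax (subset_closure hw)⟩
    · exact ⟨y, hyD, fun w hw ↦ (hmax (subset_closure hw)).trans ((hbd x hx_frontier).trans hy)⟩
  have hp_real : ((ψ p).toReal : EReal) = ψ p := EReal.coe_toReal (hψ.2.1 p hpD)
    (EReal.bot_lt_zero.trans_le (hy.trans (hp y hyD))).ne'
  obtain ⟨w, hw, hwD⟩ := ((eventually_lt_of_lelongNumber_pos hl (ψ p).toReal).and
    (mem_nhdsWithin_of_mem_nhds (hD.mem_nhds hz₀))).exists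
  rw [← hp_real] at hp
  exact hw.ne (hψ.eq_of_forall_le hψm hD hDc hp hpD hp_real.symm w hwD)

end StrongMaximumPrinciple

lemma locallyLipschitzOn_of_contDiffOn {E F : Type*} [NormedAddCommGroup E] [NormedSpace ℝ E]
    [NormedAddCommGroup F] [NormedSpace ℝ F] {g : E → F} {U : Set E} (hU : IsOpen U)
    (hg : ContDiffOn ℝ 1 g U) : LocallyLipschitzOn U g := fun _ hx ↦
  let ⟨K, t, ht, hK⟩ := (hg.contDiffAt (hU.mem_nhds hx)).exists_lipschitzOnWith
  ⟨K, t, mem_nhdsWithin_of_mem_nhds ht, hK⟩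

lemma upperSemicontinuousOn_closure_of_eq_near_frontier {X : Type*} [TopologicalSpace X]
    {D U : Set X} {ψ : X → EReal} {g : X → ℝ} (hD : IsOpen D) (hψ : UpperSemicontinuousOn ψ D)
    (hU : IsOpen U) (hUbd : frontier D ⊆ U) (hg : ContinuousOn g U)
    (hψg : ∀ z ∈ U ∩ closure D, ψ z = g z) : UpperSemicontinuousOn ψ (closure D) := by
  intro z hz
  by_cases hzD : z ∈ D
  · refine UpperSemicontinuousAt.upperSemicontinuousWithinAt _ fun y hy ↦ ?_
    simpa only [hD.nhdsWithin_eq hzD] using hψ z hzD y hy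
  · have hzU : z ∈ U := hUbd ⟨hz, by rwa [hD.interior_eq]⟩
    intro y hy
    rw [hψg z ⟨hzU, hz⟩] at hy
    have h_near : ∀ᶠ w in 𝓝 z, (g w : EReal) < y := (continuous_coe_real_ereal.continuousAt.comp
      (hg.continuousAt (hU.mem_nhds hzU))).eventually_lt_const hy
    filter_upwards [mem_nhdsWithin_of_mem_nhds h_near,
      mem_nhdsWithin_of_mem_nhds (hU.mem_nhds hzU), self_mem_nhdsWithin] with w hw hwU hwD
    rwa [hψg w ⟨hwU, hwD⟩]

theorem hardy_class_of_liminf_finite_general {D U : Set ℂ} (hD : IsOpen D)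
    (hDb : Bornology.IsBounded D) {ψ : ℂ → EReal} (hψm : Measurable ψ) (hψ : SubharmonicOnE ψ D)
    (hneg : ∀ z ∈ D, ψ z < 0) (hU : IsOpen U) (hUbd : frontier D ⊆ U) {g : ℂ → ℝ}
    (hg : LocallyLipschitzOn U g) (hg0 : ∀ z ∈ frontier D, g z = 0)
    (hψg : ∀ z ∈ U ∩ D, ψ z = g z) {f : ℂ → ℂ} (hf : DifferentiableOn ℂ f D)
    (hliminf : liminf (fun r : ℝ ↦
        (∫⁻ z in {z | z ∈ D ∧ ((Real.log r : ℝ) : EReal) ≤ ψ z}, ENNReal.ofReal (‖f z‖ ^ 2)) /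
          ENNReal.ofReal (1 - r)) (𝓝[<] 1) < ⊤) :
    HardyH2c D f := by
  obtain ⟨V, hV, hfV⟩ := exists_harmonicOnNhd_ge_of_liminf_lt_top hD hDb hψm hψ hneg hU hUbd hg hg0
    hψg (contSubharmonicOn_norm_sq hD hf) (fun z _ ↦ sq_nonneg ‖f z‖) hliminf
  exact ⟨hf, V, .of_harmonicOnNhd hD hV, hfV⟩

/-- a sufficient condition for membership in the Hardy class `H₂^(c)(D)`:
if `liminf_{r→1⁻} (∫_{{ψ ≥ log r}} |f|²) / (1-r) < ∞` then `f ∈ H₂^(c)(D)`. -/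
theorem hardy_class_of_liminf_finite
    (n : ℕ) (D : Set ℂ) (hD : IsRegularRegion n D)
    (z₀ : ℂ) (hz₀ : z₀ ∈ D)
    (G : ℂ → EReal) (hG : IsGreenFunction D z₀ G)
    (ν : ℂ → ℂ) (hν : IsOutwardUnitNormal D ν)
    (ψ : ℂ → EReal)
    (hψmeas : Measurable ψ) (hψsh : SubharmonicOnE ψ D)
    (hψbd : ∀ z ∈ frontier D, ψ z = 0)
    (hψlel : 0 < lelongNumber ψ z₀)
    (U : Set ℂ) (hU : IsOpen U) (hUbd : frontier D ⊆ U)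
    (ψC1 : ℂ → ℝ) (hψC1 : ContDiffOn ℝ 1 ψC1 U)
    (hψeq : ∀ z ∈ U ∩ closure D, ψ z = ((ψC1 z : ℝ) : EReal))
    (hνpos : ∀ z ∈ frontier D, 0 < fderiv ℝ ψC1 z (ν z))
    (f : ℂ → ℂ) (hf : DifferentiableOn ℂ f D)
    (hliminf : Filter.liminf
        (fun r : ℝ =>
          (∫⁻ z in {z | z ∈ D ∧ ((Real.log r : ℝ) : EReal) ≤ ψ z},
              ENNReal.ofReal (‖f z‖ ^ 2)) / ENNReal.ofReal (1 - r))
        (nhdsWithin 1 (Set.Iio (1:ℝ))) < ⊤) :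
    HardyH2c D f := by
  obtain ⟨hDo, hDc, hDb, -⟩ := hD
  have hneg : ∀ z ∈ D, ψ z < 0 :=
    hψsh.neg_of_lelongNumber_pos hψmeas hDo hDc.isPreconnected hDb
      (upperSemicontinuousOn_closure_of_eq_near_frontier hDo hψsh.1 hU hUbd hψC1.continuousOn hψeq)
      (fun z hz ↦ (hψbd z hz).le) hz₀ hψlel
  have hψC1_zero : ∀ z ∈ frontier D, ψC1 z = 0 := fun z hz ↦ EReal.coe_eq_zero.1
    ((hψeq z ⟨hUbd hz, frontier_subset_closure hz⟩).symm.trans (hψbd z hz))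
  exact hardy_class_of_liminf_finite_general hDo hDb hψmeas hψsh hneg hU hUbd
    (locallyLipschitzOn_of_contDiffOn hU hψC1) hψC1_zero
    (fun z hz ↦ hψeq z ⟨hz.1, subset_closure hz.2⟩) hf hliminf
end
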